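/- arXiv:2603.08449 — 3 statements merged into one kernel-verified Lean document; each statement's English description precedes it below -/
import Mathlib

section
/- Let 1 ≤ p < ∞, a > −1, and let φ : (0,∞) → ℂ be measurable with ∫₀^∞ |φ(t)| t^{(a+1)/p − 1} dt < ∞. Let λ ∈ ℂ lie outside the closure of { k̂_{a,p}(ξ) : ξ ∈ ℝ }. Then there exists a measurable ψ : (0,∞) → ℂ with ∫₀^∞ |ψ(t)| t^{(a+1)/p − 1} dt < ∞ such that for every holomorphic function f on 𝕌 with ‖f‖_{H^p_{|·|^a}} < ∞ the following two identities hold at every point of 𝕌: (1/λ)(g + ℋ_ψ g) = f where g = λf − ℋ_φ f, and λh − ℋ_φ h = f where h = (1/λ)(f + ℋ_ψ f). -/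
open MeasureTheory
open scoped ENNReal NNReal

/-- The upper half-plane `𝕌 = {z : Im z > 0}`. -/
def upperHalf : Set ℂ := {z : ℂ | 0 < z.im}

/-- The Hausdorff operator `ℋ_φ f(z) = ∫₀^∞ f(z/t) φ(t) t⁻¹ dt` on functions on `𝕌`. -/
noncomputable def HphiHol (φ : ℝ → ℂ) (f : ℂ → ℂ) (z : ℂ) : ℂ :=
  ∫ t in Set.Ioi (0 : ℝ), f (z / (t : ℂ)) * φ t / (t : ℂ)

/-- The power weighted Hardy norm
`‖f‖_{H^p_{|·|^a}} = sup_{y>0} (∫_ℝ |f(x+iy)|^p |x|^a dx)^{1/p}` (valued in `ℝ≥0∞`). -/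
noncomputable def hardyNorm (p a : ℝ) (f : ℂ → ℂ) : ℝ≥0∞ :=
  ⨆ y ∈ Set.Ioi (0 : ℝ),
    (∫⁻ x : ℝ, (‖f ((x : ℂ) + (y : ℂ) * Complex.I)‖₊ : ℝ≥0∞) ^ p *
      ENNReal.ofReal (|x| ^ a)) ^ (1 / p)

/-- `k̂_{a,p}(ξ) = ∫₀^∞ φ(t) t^{c − 1 − iξ} dt` with `c = (a+1)/p`. -/
noncomputable def khat (φ : ℝ → ℂ) (c : ℝ) (ξ : ℝ) : ℂ :=
  ∫ t in Set.Ioi (0 : ℝ), φ t * (t : ℂ) ^ ((c : ℂ) - 1 - Complex.I * (ξ : ℂ))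

/-!
Along a ray `{rz : r > 0}`, in the coordinate `x = log r` and with the weight `e ^ (c x)`,
`c = (a + 1) / p`, the operator `ℋ_φ` is convolution with the `L¹` kernel
`k s = φ (e ^ s) e ^ (c s)`, whose Fourier transform is `k̂_{a,p}` up to scaling. Wiener's lemma
produces `q ∈ L¹` with `l q = k + q ⋆ k`, so that `(1 + q ⋆) / l` inverts `l - k ⋆` on bounded
continuous functions, and `ψ` is `q` read back on `(0, ∞)`. The ray profiles of `f` are bounded
because `‖f (r z)‖ ≲ r ^ (-c)`: by dilation it suffices to bound `f` at a fixed point by its norm.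
There the weight `|Re ζ| ^ a` is handled by the geometric mean inequality on each circle, using that
the circle average of `log |Re ζ|` stays bounded as the radius varies.

Wiener's lemma follows from Newman's argument: approximate `𝓕 k` by a Schwartz function `w`, and
expand `(l - 𝓕 k)⁻¹` in a geometric series in `𝓕 k - w`; the powers of `(l - w)⁻¹` have algebra
norms growing only polynomially faster than their supremum norms.
-/

open Filter Set Topology
open scoped FourierTransform Convolution

section WienerAlgebra

variable {E : Type*} [NormedAddCommGroup E] [InnerProductSpace ℝ E] [FiniteDimensional ℝ E]
  [MeasurableSpace E] [BorelSpace E]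

/-- `F` belongs to the Wiener algebra `𝓕 L¹(E)`, normed by transport of the `L¹` norm, and has norm
at most `C` there. A bound is carried along instead of defining the norm itself. -/
def HasWienerNormLE (F : E → ℂ) (C : ℝ) : Prop :=
  ∃ u : E →₁[volume] ℂ, 𝓕 (u : E → ℂ) = F ∧ ‖u‖ ≤ C

lemma hasWienerNormLE_fourier {g : E → ℂ} (hg : Integrable g) :
    HasWienerNormLE (𝓕 g) (∫ x, ‖g x‖) :=
  ⟨hg.toL1 g, funext fun ξ => Real.fourier_congr_ae hg.coeFn_toL1 ξ, by
    rw [L1.norm_of_fun_eq_integral_norm]⟩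

namespace HasWienerNormLE

variable {F G : E → ℂ} {C D : ℝ}

lemma mono (hF : HasWienerNormLE F C) (h : C ≤ D) : HasWienerNormLE F D := by
  obtain ⟨u, hu, huC⟩ := hF
  exact ⟨u, hu, huC.trans h⟩

lemma add (hF : HasWienerNormLE F C) (hG : HasWienerNormLE G D) :
    HasWienerNormLE (F + G) (C + D) := by
  obtain ⟨u, rfl, huC⟩ := hF
  obtain ⟨v, rfl, hvD⟩ := hG
  exact ⟨u + v, congrArg DFunLike.coe (map_add (Real.Lp.fourierTransformCLM E ℂ) u v),
    (norm_add_le u v).trans (add_le_add huC hvD)⟩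

lemma const_smul (hF : HasWienerNormLE F C) (c : ℂ) : HasWienerNormLE (c • F) (‖c‖ * C) := by
  obtain ⟨u, rfl, huC⟩ := hF
  refine ⟨c • u, congrArg DFunLike.coe (map_smul (Real.Lp.fourierTransformCLM E ℂ) c u), ?_⟩
  rw [norm_smul]
  gcongr

lemma mul (hF : HasWienerNormLE F C) (hG : HasWienerNormLE G D) :
    HasWienerNormLE (F * G) (C * D) := by
  obtain ⟨u, rfl, huC⟩ := hF
  obtain ⟨v, rfl, hvD⟩ := hG
  have hu := L1.integrable_coeFn u
  have hv := L1.integrable_coeFn v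
  have hnorm : ∫ x, ‖((u : E → ℂ) ⋆[.mul ℂ ℂ] (v : E → ℂ)) x‖ ≤ ‖u‖ * ‖v‖ := calc
    _ ≤ ∫ x, ((fun x => ‖u x‖) ⋆[.mul ℝ ℝ] fun x => ‖v x‖) x := by
      refine integral_mono (hu.integrable_convolution _ hv).norm
        (hu.norm.integrable_convolution _ hv.norm) fun x => ?_
      rw [convolution_mul, convolution_mul]
      exact (norm_integral_le_integral_norm _).trans_eq (by simp only [norm_mul])
    _ = ‖u‖ * ‖v‖ := by
      rw [integral_convolution _ hu.norm hv.norm, ← L1.norm_eq_integral_norm,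
        ← L1.norm_eq_integral_norm, ContinuousLinearMap.mul_apply']
  have hconv := hasWienerNormLE_fourier (hu.integrable_convolution (.mul ℂ ℂ) hv)
  rw [show 𝓕 ((u : E → ℂ) ⋆[.mul ℂ ℂ] (v : E → ℂ)) = 𝓕 (u : E → ℂ) * 𝓕 (v : E → ℂ) from
    funext fun ξ => Real.fourier_mul_convolution_eq hu hv ξ] at hconv
  exact hconv.mono (hnorm.trans (mul_le_mul huC hvD (norm_nonneg v) ((norm_nonneg u).trans huC)))

lemma mul_pow (hF : HasWienerNormLE F C) (hG : HasWienerNormLE G D) (n : ℕ) :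
    HasWienerNormLE (F * G ^ n) (C * D ^ n) := by
  induction n with
  | zero => simpa only [pow_zero, mul_one] using hF
  | succ n ih => simpa only [pow_succ, mul_assoc] using ih.mul hG

lemma norm_le (hF : HasWienerNormLE F C) (ξ : E) : ‖F ξ‖ ≤ C := by
  obtain ⟨u, rfl, huC⟩ := hF
  exact ((Real.Lp.fourierTransform u).norm_coe_le_norm ξ).trans
    ((BoundedContinuousFunction.norm_ofNormedAddCommGroup_le _ (norm_nonneg u) _).trans huC)

lemma tsum {F : ℕ → E → ℂ} {C : ℕ → ℝ} (hF : ∀ n, HasWienerNormLE (F n) (C n))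
    (hC : Summable C) : HasWienerNormLE (fun ξ => ∑' n, F n ξ) (∑' n, C n) := by
  choose u hu huC using hF
  have hsum : Summable u := .of_norm_bounded hC huC
  refine ⟨∑' n, u n, funext fun ξ => ?_, tsum_of_norm_bounded hC.hasSum huC⟩
  have hξ := (hsum.hasSum.mapL (Real.Lp.fourierTransformCLM E ℂ)).mapL
    (BoundedContinuousFunction.evalCLM ℂ ξ)
  simp only [← hu]
  exact hξ.tsum_eq.symm

end HasWienerNormLE

/-- Injectivity of the Fourier transform on `L¹`, by the multiplication formula against Schwartz
functions. -/
lemma ae_eq_zero_of_fourier_eq_zero {g : E → ℂ} (hg : Integrable g) (h : 𝓕 g = 0) :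
    g =ᵐ[volume] 0 := by
  refine ae_eq_zero_of_integral_contDiff_smul_eq_zero hg.locallyIntegrable fun u hu hus => ?_
  have hu' : ContDiff ℝ (⊤ : ℕ∞) fun x => (u x : ℂ) := Complex.ofRealCLM.contDiff.comp hu
  have hus' : HasCompactSupport fun x => (u x : ℂ) := hus.comp_left (g := Complex.ofReal) rfl
  let s : SchwartzMap E ℂ := hus'.toSchwartzMap hu'
  let r : SchwartzMap E ℂ := 𝓕⁻ s
  have hr : 𝓕 (r : E → ℂ) = s := by
    rw [← SchwartzMap.fourier_coe, FourierTransform.fourier_fourierInv_eq]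
  have hflip : ∫ ξ, 𝓕 g ξ * r ξ = ∫ x, g x * 𝓕 (r : E → ℂ) x := by
    simpa only [flip_innerₗ] using! VectorFourier.integral_bilin_fourierIntegral_eq_flip
      (ContinuousLinearMap.mul ℂ ℂ) (L := innerₗ E) Real.continuous_fourierChar continuous_inner
      hg (r.integrable (μ := volume))
  simpa [h, hr, s, mul_comm, eq_comm] using hflip

lemma exists_schwartzMap_integral_norm_sub_lt {k : E → ℂ} (hk : Integrable k) {ε : ℝ}
    (hε : 0 < ε) : ∃ u : SchwartzMap E ℂ, ∫ x, ‖k x - u x‖ < ε := by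
  obtain ⟨u, hu⟩ := (SchwartzMap.denseRange_toLpCLM (E := E) (F := ℂ) (p := 1) (μ := volume)
    ENNReal.one_ne_top).exists_dist_lt hk.toL1 hε
  refine ⟨u, (integral_congr_ae ?_).trans_lt ((L1.dist_eq_integral_dist _ _).symm.trans_lt hu)⟩
  filter_upwards [hk.coeFn_toL1, u.coeFn_toLp 1 volume] with x hkx hux
  rw [SchwartzMap.toLpCLM_apply, hkx, hux, dist_eq_norm]

end WienerAlgebra

section Decay

lemma norm_fourier_le_of_hasDerivAt {F F' F'' : ℝ → ℂ} (h₁ : ∀ x, HasDerivAt F (F' x) x)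
    (h₂ : ∀ x, HasDerivAt F' (F'' x) x) (hF : Integrable F) (hF' : Integrable F')
    (hF'' : Integrable F'') (ξ : ℝ) :
    ‖𝓕 F ξ‖ ≤ ((∫ x, ‖F x‖) + ∫ x, ‖F'' x‖) * (1 + ξ ^ 2)⁻¹ := by
  have hderiv₁ : deriv F = F' := funext fun x => (h₁ x).deriv
  have hderiv₂ : deriv F' = F'' := funext fun x => (h₂ x).deriv
  have hfourier₁ := Real.fourier_deriv hF (fun x => (h₁ x).differentiableAt) (by rwa [hderiv₁])
  have hfourier₂ := Real.fourier_deriv hF' (fun x => (h₂ x).differentiableAt) (by rwa [hderiv₂])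
  rw [hderiv₁] at hfourier₁
  rw [hderiv₂, hfourier₁] at hfourier₂
  have hbound := (hasWienerNormLE_fourier hF).norm_le ξ
  have hbound'' := (hasWienerNormLE_fourier hF'').norm_le ξ
  simp only [hfourier₂, smul_eq_mul, norm_mul, Complex.norm_real, Complex.norm_I, mul_one,
    Complex.norm_ofNat, Real.norm_eq_abs, abs_of_pos Real.pi_pos] at hbound''
  have hpi : (1 : ℝ) ≤ (2 * Real.pi) ^ 2 := by nlinarith [Real.pi_gt_three]
  have hsq : ξ ^ 2 * ‖𝓕 F ξ‖ ≤ ∫ x, ‖F'' x‖ := calc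
    ξ ^ 2 * ‖𝓕 F ξ‖ ≤ (2 * Real.pi) ^ 2 * (ξ ^ 2 * ‖𝓕 F ξ‖) :=
      le_mul_of_one_le_left (by positivity) hpi
    _ ≤ ∫ x, ‖F'' x‖ := by rw [← sq_abs ξ]; linarith
  rw [← div_eq_mul_inv, le_div_iff₀ (by positivity)]
  linarith

lemma hasWienerNormLE_of_hasDerivAt {F F' F'' : ℝ → ℂ} (h₁ : ∀ x, HasDerivAt F (F' x) x)
    (h₂ : ∀ x, HasDerivAt F' (F'' x) x) (hF : Integrable F) (hF' : Integrable F')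
    (hF'' : Integrable F'') :
    HasWienerNormLE F (Real.pi * ((∫ x, ‖F x‖) + ∫ x, ‖F'' x‖)) := by
  have hdecay := norm_fourier_le_of_hasDerivAt h₁ h₂ hF hF' hF''
  have hmajorant : Integrable fun ξ : ℝ => ((∫ x, ‖F x‖) + ∫ x, ‖F'' x‖) * (1 + ξ ^ 2)⁻¹ :=
    integrable_inv_one_add_sq.const_mul _
  have hcont : Continuous F := continuous_iff_continuousAt.2 fun x => (h₁ x).continuousAt
  have hFint : Integrable (𝓕 F) := hmajorant.mono'
    (VectorFourier.fourierIntegral_continuous Real.continuous_fourierChar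
      (by exact continuous_inner) hF).aestronglyMeasurable (.of_forall hdecay)
  have hinv : 𝓕⁻ F = fun ξ => 𝓕 F (-ξ) := funext (Real.fourierInv_eq_fourier_neg F)
  have hinvInt : Integrable (𝓕⁻ F) := hinv ▸ hFint.comp_neg
  rw [← hcont.fourier_fourierInv_eq hF hFint]
  refine (hasWienerNormLE_fourier hinvInt).mono ?_
  rw [hcont.fourier_fourierInv_eq hF hFint]
  calc ∫ x, ‖𝓕⁻ F x‖ = ∫ ξ, ‖𝓕 F ξ‖ := by rw [hinv, integral_neg_eq_self fun ξ => ‖𝓕 F ξ‖]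
    _ ≤ ∫ ξ : ℝ, ((∫ x, ‖F x‖) + ∫ x, ‖F'' x‖) * (1 + ξ ^ 2)⁻¹ :=
      integral_mono hFint.norm hmajorant hdecay
    _ = Real.pi * ((∫ x, ‖F x‖) + ∫ x, ‖F'' x‖) := by
      rw [integral_const_mul, integral_univ_inv_one_add_sq, mul_comm]

lemma hasWienerNormLE_of_hasDerivAt_of_norm_le {F F' F'' : ℝ → ℂ} {b₀ b₂ : ℝ → ℝ}
    (h₁ : ∀ x, HasDerivAt F (F' x) x) (h₂ : ∀ x, HasDerivAt F' (F'' x) x) (hF' : Integrable F')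
    (hb₀ : Integrable b₀) (hFb₀ : ∀ x, ‖F x‖ ≤ b₀ x)
    (hb₂ : Integrable b₂) (hFb₂ : ∀ x, ‖F'' x‖ ≤ b₂ x) :
    HasWienerNormLE F (Real.pi * ((∫ x, b₀ x) + ∫ x, b₂ x)) := by
  have hcont : Continuous F := continuous_iff_continuousAt.2 fun x => (h₁ x).continuousAt
  have hF : Integrable F := hb₀.mono' hcont.aestronglyMeasurable (.of_forall hFb₀)
  have hmeas : Measurable F'' := (funext fun x => (h₂ x).deriv : deriv F' = F'') ▸
    measurable_deriv F'
  have hF'' : Integrable F'' := hb₂.mono' hmeas.aestronglyMeasurable (.of_forall hFb₂)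
  exact (hasWienerNormLE_of_hasDerivAt h₁ h₂ hF hF' hF'').mono <| mul_le_mul_of_nonneg_left
    (add_le_add (integral_mono hF.norm hb₀ hFb₀) (integral_mono hF''.norm hb₂ hFb₂))
    Real.pi_pos.le

end Decay

section InversePowers

lemma norm_pow_sub_pow_le {R : Type*} [NormedCommRing R] [NormOneClass R] {x y : R} {M : ℝ}
    (hx : ‖x‖ ≤ M) (hy : ‖y‖ ≤ M) (n : ℕ) : ‖x ^ n - y ^ n‖ ≤ n * M ^ (n - 1) * ‖x - y‖ := by
  rw [← geom_sum₂_mul]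
  refine (norm_mul_le _ _).trans (mul_le_mul_of_nonneg_right ?_ (norm_nonneg _))
  calc ‖∑ i ∈ Finset.range n, x ^ i * y ^ (n - 1 - i)‖
      ≤ ∑ _ ∈ Finset.range n, M ^ (n - 1) := norm_sum_le_of_le _ fun i hi => by
        have hM : 0 ≤ M := (norm_nonneg x).trans hx
        have hi' : i ≤ n - 1 := Nat.le_sub_one_of_lt (Finset.mem_range.1 hi)
        calc ‖x ^ i * y ^ (n - 1 - i)‖ ≤ M ^ i * M ^ (n - 1 - i) := by
              refine (norm_mul_le _ _).trans ?_
              gcongr <;> exact (norm_pow_le _ _).trans (by gcongr)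
          _ = M ^ (n - 1) := pow_mul_pow_sub M hi'
    _ = n * M ^ (n - 1) := by rw [Finset.sum_const, Finset.card_range, nsmul_eq_mul]

lemma hasDerivAt_inv_const_sub_pow {𝕜 𝕂 : Type*} [NontriviallyNormedField 𝕜]
    [NontriviallyNormedField 𝕂] [NormedAlgebra 𝕜 𝕂] {w : 𝕜 → 𝕂} {w' l : 𝕂} {x : 𝕜}
    (hw : HasDerivAt w w' x) (hx : l - w x ≠ 0) (n : ℕ) :
    HasDerivAt (fun y => (l - w y)⁻¹ ^ n) (n * w' * (l - w x)⁻¹ ^ (n + 1)) x := by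
  refine (((hw.const_sub l).fun_inv hx).fun_pow n).congr_deriv ?_
  cases n with
  | zero => simp
  | succ n =>
    simp only [Nat.add_sub_cancel, inv_pow]
    field_simp
    ring

lemma le_norm_of_forall_le_norm_sub {X 𝕜 : Type*} [NormedAddCommGroup 𝕜] {f : Filter X}
    [f.NeBot] {g : X → 𝕜} {l : 𝕜} {η : ℝ} (hg : Tendsto g f (𝓝 0)) (h : ∀ x, η ≤ ‖l - g x‖) :
    η ≤ ‖l‖ := by
  simpa only [sub_zero] using ge_of_tendsto' (tendsto_const_nhds.sub hg).norm h

lemma norm_inv_sub_pow_sub_inv_pow_le {𝕜 : Type*} [NormedField 𝕜] {l w : 𝕜} {η : ℝ} (hη : 0 < η)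
    (h : η ≤ ‖l - w‖) (hl : η ≤ ‖l‖) (n : ℕ) :
    ‖(l - w)⁻¹ ^ n - l⁻¹ ^ n‖ ≤ n * η⁻¹ ^ (n + 1) * ‖w‖ := by
  have hinv : ∀ {x : 𝕜}, η ≤ ‖x‖ → ‖x⁻¹‖ ≤ η⁻¹ := fun hx => by
    rw [norm_inv]; exact inv_anti₀ hη hx
  have hdiff : (l - w)⁻¹ - l⁻¹ = (l - w)⁻¹ * l⁻¹ * w := by
    have := norm_pos_iff.1 (hη.trans_le h)
    have := norm_pos_iff.1 (hη.trans_le hl)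
    field_simp
    ring
  calc ‖(l - w)⁻¹ ^ n - l⁻¹ ^ n‖ ≤ n * η⁻¹ ^ (n - 1) * ‖(l - w)⁻¹ - l⁻¹‖ :=
      norm_pow_sub_pow_le (hinv h) (hinv hl) n
    _ ≤ n * η⁻¹ ^ (n - 1) * (η⁻¹ * η⁻¹ * ‖w‖) := by
      rw [hdiff, norm_mul, norm_mul]
      gcongr
      exacts [hinv h, hinv hl]
    _ = n * η⁻¹ ^ (n + 1) * ‖w‖ := by
      cases n with
      | zero => simp
      | succ n => rw [Nat.add_sub_cancel]; ring

lemma norm_second_deriv_inv_pow_le {𝕜 : Type*} [RCLike 𝕜] {v w₁ w₂ : 𝕜} {V : ℝ}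
    (hv : ‖v‖ ≤ V) (n : ℕ) :
    ‖n * (w₂ * v ^ (n + 1) + w₁ * (((n + 1 : ℕ) : 𝕜) * w₁ * v ^ (n + 2)))‖ ≤
      (n + 1) ^ 2 * V ^ n * (V * ‖w₂‖ + V ^ 2 * ‖w₁‖ ^ 2) := by
  have hV : 0 ≤ V := (norm_nonneg v).trans hv
  calc
    _ ≤ n * (‖w₂‖ * V ^ (n + 1) + ‖w₁‖ * ((n + 1 : ℕ) * ‖w₁‖ * V ^ (n + 2))) := by
      rw [norm_mul, RCLike.norm_natCast]
      gcongr
      refine (norm_add_le _ _).trans ?_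
      simp only [norm_mul, norm_pow, RCLike.norm_natCast]
      gcongr
    _ ≤ (n + 1) * ((n + 1) * (‖w₂‖ * V ^ (n + 1)) +
        ‖w₁‖ * ((n + 1 : ℕ) * ‖w₁‖ * V ^ (n + 2))) := by
      have hone : (1 : ℝ) ≤ n + 1 := by simp
      exact mul_le_mul (by linarith) (add_le_add_left
        (le_mul_of_one_le_left (by positivity) hone) _) (by positivity) (by positivity)
    _ = (n + 1) ^ 2 * V ^ n * (V * ‖w₂‖ + V ^ 2 * ‖w₁‖ ^ 2) := by
      push_cast
      ring

variable (w : SchwartzMap ℝ ℂ) {l : ℂ} {η : ℝ}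

/-- The algebra norm of `(l - w)⁻ⁿ - l⁻ⁿ` exceeds its supremum norm by a polynomial factor only,
since two derivatives bring down at most `n ^ 2`. -/
lemma exists_hasWienerNormLE_inv_pow_sub (hη : 0 < η) (h : ∀ ξ, η ≤ ‖l - w ξ‖) :
    ∃ C, ∀ n : ℕ, HasWienerNormLE (fun ξ => (l - w ξ)⁻¹ ^ n - l⁻¹ ^ n)
      ((n + 1) ^ 2 * η⁻¹ ^ n * C) := by
  let w₁ : SchwartzMap ℝ ℂ := SchwartzMap.derivCLM ℂ ℂ w
  let w₂ : SchwartzMap ℝ ℂ := SchwartzMap.derivCLM ℂ ℂ w₁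
  let v : ℝ → ℂ := fun ξ => (l - w ξ)⁻¹
  have hne : ∀ ξ, l - w ξ ≠ 0 := fun ξ => norm_pos_iff.1 (hη.trans_le (h ξ))
  have hl : η ≤ ‖l‖ := le_norm_of_forall_le_norm_sub w.tendsto_cocompact h
  have hvη : ∀ ξ, ‖v ξ‖ ≤ η⁻¹ := fun ξ => by rw [norm_inv]; exact inv_anti₀ hη (h ξ)
  have : Continuous v := (continuous_const.sub w.continuous).inv₀ hne
  let b₀ : ℝ → ℝ := fun ξ => η⁻¹ * ‖w ξ‖
  let b₂ : ℝ → ℝ := fun ξ => η⁻¹ * ‖w₂ ξ‖ + η⁻¹ ^ 2 * ‖w₁ ξ‖ ^ 2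
  have hb₀ : Integrable b₀ := w.integrable.norm.const_mul _
  have hsq : Integrable fun ξ => ‖w₁ ξ‖ ^ 2 := by
    simpa [sq] using (SchwartzMap.pairing (.mul ℂ ℂ) w₁ w₁).integrable.norm
  have hb₂ : Integrable b₂ := (w₂.integrable.norm.const_mul _).add (hsq.const_mul _)
  refine ⟨Real.pi * ((∫ ξ, b₀ ξ) + ∫ ξ, b₂ ξ), fun n => ?_⟩
  have hderiv₁ : ∀ ξ, HasDerivAt (fun ξ => v ξ ^ n - l⁻¹ ^ n) (n * (w₁ ξ * v ξ ^ (n + 1))) ξ :=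
    fun ξ => ((hasDerivAt_inv_const_sub_pow (w.hasDerivAt ξ) (hne ξ) n).sub_const _).congr_deriv
      (mul_assoc _ _ _)
  have hderiv₂ : ∀ ξ, HasDerivAt (fun ξ => n * (w₁ ξ * v ξ ^ (n + 1)))
      (n * (w₂ ξ * v ξ ^ (n + 1) + w₁ ξ * ((n + 1 : ℕ) * w₁ ξ * v ξ ^ (n + 2)))) ξ := fun ξ =>
    ((w₁.hasDerivAt ξ).fun_mul
      (hasDerivAt_inv_const_sub_pow (w.hasDerivAt ξ) (hne ξ) (n + 1))).const_mul (n : ℂ)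
  have hint₁ : Integrable fun ξ => n * (w₁ ξ * v ξ ^ (n + 1)) :=
    (w₁.integrable.mul_bdd (c := η⁻¹ ^ (n + 1)) (by fun_prop) <| .of_forall fun ξ =>
      (norm_pow_le _ _).trans (pow_le_pow_left₀ (norm_nonneg _) (hvη ξ) _)).const_mul _
  have hbound₀ : ∀ ξ, ‖v ξ ^ n - l⁻¹ ^ n‖ ≤ (n + 1) ^ 2 * η⁻¹ ^ n * b₀ ξ := fun ξ => by
    calc ‖v ξ ^ n - l⁻¹ ^ n‖ ≤ n * η⁻¹ ^ (n + 1) * ‖w ξ‖ :=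
        norm_inv_sub_pow_sub_inv_pow_le hη (h ξ) hl n
      _ ≤ (n + 1) ^ 2 * η⁻¹ ^ (n + 1) * ‖w ξ‖ := by
        gcongr
        nlinarith [n.cast_nonneg (α := ℝ)]
      _ = (n + 1) ^ 2 * η⁻¹ ^ n * b₀ ξ := by ring
  have hbound₂ := fun ξ => norm_second_deriv_inv_pow_le (w₁ := w₁ ξ) (w₂ := w₂ ξ) (hvη ξ) n
  refine (hasWienerNormLE_of_hasDerivAt_of_norm_le hderiv₁ hderiv₂ hint₁ (hb₀.const_mul _) hbound₀
    (hb₂.const_mul _) hbound₂).mono (le_of_eq ?_)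
  rw [integral_const_mul ((n + 1 : ℝ) ^ 2 * η⁻¹ ^ n),
    integral_const_mul ((n + 1 : ℝ) ^ 2 * η⁻¹ ^ n)]
  ring

lemma exists_hasWienerNormLE_mul_inv_pow (hη : 0 < η) (h : ∀ ξ, η ≤ ‖l - w ξ‖) :
    ∃ C, ∀ {F : ℝ → ℂ} {D : ℝ}, HasWienerNormLE F D → ∀ n : ℕ,
      HasWienerNormLE (fun ξ => F ξ * (l - w ξ)⁻¹ ^ n) ((n + 1) ^ 2 * η⁻¹ ^ n * (D * C)) := by
  obtain ⟨C, hC⟩ := exists_hasWienerNormLE_inv_pow_sub w hη h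
  refine ⟨C + 1, fun {F D} hF n => ?_⟩
  have hD : 0 ≤ D := (norm_nonneg _).trans (hF.norm_le 0)
  have hl : ‖l⁻¹ ^ n‖ ≤ (n + 1) ^ 2 * η⁻¹ ^ n := by
    rw [norm_pow, norm_inv]
    have : η ≤ ‖l‖ := le_norm_of_forall_le_norm_sub w.tendsto_cocompact h
    have hone : (1 : ℝ) ≤ (n + 1) ^ 2 := one_le_pow₀ (by simp)
    exact (pow_le_pow_left₀ (by positivity) (inv_anti₀ hη this) n).trans
      (le_mul_of_one_le_left (by positivity) hone)
  have hsplit : (fun ξ => F ξ * (l - w ξ)⁻¹ ^ n) =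
      F * (fun ξ => (l - w ξ)⁻¹ ^ n - l⁻¹ ^ n) + l⁻¹ ^ n • F := by
    ext ξ
    simp only [Pi.add_apply, Pi.mul_apply, Pi.smul_apply, smul_eq_mul]
    ring
  rw [hsplit]
  refine ((hF.mul (hC n)).add (hF.const_smul _)).mono ?_
  calc D * ((n + 1) ^ 2 * η⁻¹ ^ n * C) + ‖l⁻¹ ^ n‖ * D
      ≤ D * ((n + 1) ^ 2 * η⁻¹ ^ n * C) + (n + 1) ^ 2 * η⁻¹ ^ n * D := by gcongr
    _ = (n + 1) ^ 2 * η⁻¹ ^ n * (D * (C + 1)) := by ring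

end InversePowers

section WienerLemma

lemma tsum_mul_pow_mul_inv_pow_succ {𝕜 : Type*} [NormedField 𝕜] {b e m : 𝕜}
    (h : ‖e‖ < ‖m‖) : ∑' n : ℕ, b * e ^ n * m⁻¹ ^ (n + 1) = b / (m - e) := by
  have hm : m ≠ 0 := norm_pos_iff.1 ((norm_nonneg e).trans_lt h)
  have hratio : ‖e * m⁻¹‖ < 1 := by
    rwa [norm_mul, norm_inv, ← div_eq_mul_inv, div_lt_one (norm_pos_iff.2 hm)]
  have hsum := (hasSum_geometric_of_norm_lt_one hratio).mul_left (b * m⁻¹)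
  convert hsum.tsum_eq using 1
  · exact tsum_congr fun n => by ring
  · have : m - e ≠ 0 := sub_ne_zero.2 fun hme => h.ne (congrArg norm hme.symm)
    have : 1 - e * m⁻¹ ≠ 0 := sub_ne_zero.2 fun hone => by
      simp [← hone] at hratio
    field_simp

lemma fourier_sub_of_integrable {E F : Type*} [NormedAddCommGroup E] [InnerProductSpace ℝ E]
    [FiniteDimensional ℝ E] [MeasurableSpace E] [BorelSpace E] [NormedAddCommGroup F]
    [NormedSpace ℂ F] {f g : E → F} (hf : Integrable f) (hg : Integrable g) :
    𝓕 (f - g) = 𝓕 f - 𝓕 g := by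
  ext ξ
  simp only [Real.fourier_eq, Pi.sub_apply, smul_sub]
  exact integral_sub ((Real.fourierIntegral_convergent_iff ξ).2 hf)
    ((Real.fourierIntegral_convergent_iff ξ).2 hg)

lemma exists_forall_le_norm_sub_of_notMem_closure_range {X 𝕜 : Type*} [SeminormedAddCommGroup 𝕜]
    {g : X → 𝕜} {l : 𝕜} (hl : l ∉ closure (range g)) : ∃ δ > 0, ∀ x, δ ≤ ‖l - g x‖ := by
  simpa [Metric.mem_closure_iff, dist_eq_norm] using hl

variable {k : ℝ → ℂ} {l : ℂ}

/-- Split `𝓕 k = w + e` with `w` Schwartz and `e` small in the algebra norm, and expand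
`(l - 𝓕 k)⁻¹ = ∑ eⁿ (l - w)⁻⁽ⁿ⁺¹⁾`. -/
lemma exists_hasWienerNormLE_fourier_div (hk : Integrable k) (hl : l ∉ closure (range (𝓕 k))) :
    ∃ C, HasWienerNormLE (fun ξ => 𝓕 k ξ / (l - 𝓕 k ξ)) C := by
  obtain ⟨δ, hδ, hle⟩ := exists_forall_le_norm_sub_of_notMem_closure_range hl
  obtain ⟨u, hu⟩ := exists_schwartzMap_integral_norm_sub_lt hk (ε := δ / 3) (by positivity)
  let w : SchwartzMap ℝ ℂ := 𝓕 u
  let e : ℝ → ℂ := 𝓕 k - ⇑w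
  have he : HasWienerNormLE e (δ / 3) := by
    have hsub : 𝓕 (k - ⇑u) = e := by
      rw [fourier_sub_of_integrable hk u.integrable, ← SchwartzMap.fourier_coe]
    exact hsub ▸ (hasWienerNormLE_fourier (hk.sub u.integrable)).mono hu.le
  have hsplit : ∀ ξ, l - w ξ - e ξ = l - 𝓕 k ξ := fun ξ => by
    simp only [e, Pi.sub_apply]
    ring
  have hw : ∀ ξ, 2 * δ / 3 ≤ ‖l - w ξ‖ := fun ξ => by
    have := norm_sub_le (l - w ξ) (e ξ)
    rw [hsplit] at this
    linarith [he.norm_le ξ, hle ξ]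
  obtain ⟨C, hC⟩ := exists_hasWienerNormLE_mul_inv_pow w (by positivity) hw
  have hterm := fun n : ℕ => hC ((hasWienerNormLE_fourier hk).mul_pow he n) (n + 1)
  have hsummable : Summable fun n : ℕ => (((n + 1 : ℕ) : ℝ) + 1) ^ 2 * (2 * δ / 3)⁻¹ ^ (n + 1) *
      ((∫ x, ‖k x‖) * (δ / 3) ^ n * C) := by
    have hgeom : Summable fun n : ℕ => (n : ℝ) ^ 2 * (1 / 2 : ℝ) ^ n :=
      summable_pow_mul_geometric_of_norm_lt_one 2 (by norm_num)
    refine (((summable_nat_add_iff 2).2 hgeom).mul_left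
      (4 * (2 * δ / 3)⁻¹ * (∫ x, ‖k x‖) * C)).congr fun n => ?_
    have hhalf : (1 / 2 : ℝ) ^ n = (2 * δ / 3)⁻¹ ^ n * (δ / 3) ^ n := by
      rw [← mul_pow]
      congr 1
      field_simp
    rw [pow_add, hhalf]
    push_cast
    ring
  have hseries : (fun ξ => ∑' n : ℕ, (𝓕 k * e ^ n) ξ * (l - w ξ)⁻¹ ^ (n + 1)) =
      fun ξ => 𝓕 k ξ / (l - 𝓕 k ξ) := by
    ext ξ
    rw [← hsplit]
    exact tsum_mul_pow_mul_inv_pow_succ (by linarith [he.norm_le ξ, hw ξ])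
  exact ⟨_, hseries ▸ HasWienerNormLE.tsum hterm hsummable⟩

/-- **Wiener's lemma** for `L¹(ℝ)`. -/
theorem exists_integrable_mul_eq_add_convolution (hk : Integrable k)
    (hl : l ∉ closure (range (𝓕 k))) :
    ∃ q : ℝ → ℂ, Measurable q ∧ Integrable q ∧
      ∀ᵐ x, l * q x = k x + (q ⋆[.mul ℂ ℂ] k) x := by
  obtain ⟨C, u, hu, -⟩ := exists_hasWienerNormLE_fourier_div hk hl
  have hint : Integrable u := L1.integrable_coeFn u
  have hconv : Integrable ((u : ℝ → ℂ) ⋆[.mul ℂ ℂ] k) := hint.integrable_convolution _ hk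
  have hne : ∀ ξ, l - 𝓕 k ξ ≠ 0 := fun ξ h => hl (sub_eq_zero.1 h ▸ subset_closure ⟨ξ, rfl⟩)
  have hsmul : 𝓕 (l • (u : ℝ → ℂ)) = l • 𝓕 (u : ℝ → ℂ) :=
    VectorFourier.fourierIntegral_const_smul _ _ _ _ _
  have hzero : 𝓕 (l • (u : ℝ → ℂ) - k - (u : ℝ → ℂ) ⋆[.mul ℂ ℂ] k) = 0 := by
    ext ξ
    rw [fourier_sub_of_integrable ((hint.smul l).sub hk) hconv,
      fourier_sub_of_integrable (hint.smul l) hk, hsmul, Pi.sub_apply, Pi.sub_apply, Pi.smul_apply,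
      Real.fourier_mul_convolution_eq hint hk, hu, smul_eq_mul, Pi.zero_apply]
    have := hne ξ
    field_simp
    ring
  refine ⟨u, (Lp.stronglyMeasurable u).measurable, hint, ?_⟩
  filter_upwards [ae_eq_zero_of_fourier_eq_zero (((hint.smul l).sub hk).sub hconv) hzero]
    with x hx
  simpa only [Pi.sub_apply, Pi.smul_apply, smul_eq_mul, Pi.zero_apply, sub_sub, sub_eq_zero]
    using hx

lemma ne_zero_of_notMem_closure_range_fourier (hl : l ∉ closure (range (𝓕 k))) : l ≠ 0 := by
  rintro rfl
  exact hl <| mem_closure_of_tendsto (Real.zero_at_infty_fourier k) (.of_forall mem_range_self)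

end WienerLemma

section CircleAverages

lemma circleAverage_eq_average_Ioo_neg_pi_pi {E : Type*} [NormedAddCommGroup E] [NormedSpace ℝ E]
    (h : ℂ → E) (c : ℂ) (r : ℝ) :
    Real.circleAverage h c r = ⨍ θ in Ioo (-Real.pi) Real.pi, h (circleMap c r θ) := by
  have hperiodic := ((periodic_circleMap c r).comp h).intervalIntegral_add_eq 0 (-Real.pi)
  rw [zero_add, show -Real.pi + 2 * Real.pi = Real.pi by ring] at hperiodic
  rw [Real.circleAverage, setAverage_congr Ioo_ae_eq_Ioc, ← uIoc_of_le (by linarith [Real.pi_pos]),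
    interval_average_eq, sub_neg_eq_add, ← two_mul]
  exact congrArg _ hperiodic

lemma ofReal_exp_average_le_laverage {α : Type*} {m : MeasurableSpace α} {μ : Measure α}
    [IsFiniteMeasure μ] [NeZero μ] {h : α → ℝ} (hh : Integrable h μ) :
    ENNReal.ofReal (Real.exp (⨍ x, h x ∂μ)) ≤ ⨍⁻ x, ENNReal.ofReal (Real.exp (h x)) ∂μ := by
  by_cases hexp : Integrable (fun x => Real.exp (h x)) μ
  · calc ENNReal.ofReal (Real.exp (⨍ x, h x ∂μ)) ≤ ENNReal.ofReal (⨍ x, Real.exp (h x) ∂μ) :=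
        ENNReal.ofReal_le_ofReal <| convexOn_exp.map_average_le Real.continuous_exp.continuousOn
          isClosed_univ (.of_forall fun _ => mem_univ _) hh hexp
      _ = ⨍⁻ x, ENNReal.ofReal (Real.exp (h x)) ∂μ :=
        (ofReal_average hexp (.of_forall fun _ => (Real.exp_pos _).le)).trans
          (laverage_eq _ _).symm
  · have htop : ∫⁻ x, ENNReal.ofReal (Real.exp (h x)) ∂μ = ∞ := by
      by_contra hne
      exact hexp <| (lintegral_ofReal_ne_top_iff_integrable
        (Real.continuous_exp.comp_aestronglyMeasurable hh.aestronglyMeasurable)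
        (.of_forall fun _ => (Real.exp_pos _).le)).1 hne
    rw [laverage_eq, htop, ENNReal.top_div_of_ne_top (measure_ne_top _ _)]
    exact le_top

lemma ofReal_exp_circleAverage_le_laverage {h : ℂ → ℝ} {c : ℂ} {r : ℝ}
    (hh : CircleIntegrable h c r) :
    ENNReal.ofReal (Real.exp (Real.circleAverage h c r)) ≤
      ⨍⁻ θ in Ioo (-Real.pi) Real.pi, ENNReal.ofReal (Real.exp (h (circleMap c r θ))) ∂volume := by
  have hpi : -Real.pi < Real.pi := by linarith [Real.pi_pos]
  have hint : IntegrableOn (fun θ => h (circleMap c r θ)) (Ioo (-Real.pi) Real.pi) := by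
    have hperiodic : Function.Periodic (fun θ => h (circleMap c r θ)) (2 * Real.pi) :=
      (periodic_circleMap c r).comp h
    exact (intervalIntegrable_iff_integrableOn_Ioo_of_le hpi.le).1
      (hperiodic.intervalIntegrable₀ (by positivity) hh _ _)
  have : NeZero (volume.restrict (Ioo (-Real.pi) Real.pi)) :=
    ⟨by simp [Measure.restrict_eq_zero, Real.pi_pos]⟩
  rw [circleAverage_eq_average_Ioo_neg_pi_pi]
  exact ofReal_exp_average_le_laverage hint

variable {f g : ℂ → ℂ} {c : ℂ} {r : ℝ}

lemma log_norm_le_circleAverage_log_norm (hf : AnalyticOnNhd ℂ f (Metric.closedBall c |r|))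
    (hc : f c ≠ 0) : Real.log ‖f c‖ ≤ Real.circleAverage (Real.log ‖f ·‖) c r := by
  rcases eq_or_ne r 0 with rfl | hr
  · rw [Real.circleAverage_zero]
  rw [hf.circleAverage_log_norm hr hc]
  refine le_add_of_nonneg_left (finsum_nonneg fun u => ?_)
  by_cases hu : u ∈ Metric.closedBall c |r|
  · refine mul_nonneg (mod_cast MeromorphicOn.AnalyticOnNhd.divisor_nonneg hf u) ?_
    rw [Metric.mem_closedBall, dist_comm, dist_eq_norm] at hu
    rcases (norm_nonneg (c - u)).eq_or_lt with hzero | hpos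
    · simp [← hzero]
    · rw [← Real.log_abs, abs_mul, abs_of_pos (inv_pos.2 hpos)]
      exact Real.log_nonneg ((by rwa [← div_eq_mul_inv, one_le_div hpos]))
  · simp [Function.locallyFinsuppWithin.apply_eq_zero_of_notMem _ hu]

lemma ae_circleMap_ne_zero (hf : AnalyticOnNhd ℂ f (Metric.closedBall c |r|)) (hc : f c ≠ 0)
    (hr : r ≠ 0) : ∀ᵐ θ, f (circleMap c r θ) ≠ 0 := by
  have hcodisc : f ⁻¹' {0}ᶜ ∈ codiscreteWithin (Metric.sphere c |r|) :=
    codiscreteWithin_mono Metric.sphere_subset_closedBall <|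
      hf.preimage_zero_mem_codiscreteWithin hc (Metric.mem_closedBall_self (abs_nonneg r))
        ((convex_closedBall c |r|).isConnected (Metric.nonempty_closedBall.2 (abs_nonneg r)))
  have := ae_restrict_le_codiscreteWithin (μ := volume) MeasurableSet.univ
    (circleMap_preimage_codiscrete hr hcodisc)
  rwa [Measure.restrict_univ] at this

/-- Subharmonicity of `p * log ‖f‖` together with Jensen's inequality for `exp`; the factor `g`
carries the weight. -/
lemma ofReal_norm_rpow_mul_exp_circleAverage_le (hf : AnalyticOnNhd ℂ f (Metric.closedBall c |r|))
    (hg : AnalyticOnNhd ℂ g (Metric.closedBall c |r|)) (hfc : f c ≠ 0) (hgc : g c ≠ 0)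
    (hr : r ≠ 0) {p : ℝ} (hp : 0 ≤ p) (a : ℝ) :
    ENNReal.ofReal (‖f c‖ ^ p * Real.exp (a * Real.circleAverage (Real.log ‖g ·‖) c r)) ≤
      ⨍⁻ θ in Ioo (-Real.pi) Real.pi,
        ENNReal.ofReal (‖f (circleMap c r θ)‖ ^ p * ‖g (circleMap c r θ)‖ ^ a) ∂volume := by
  have hfi := (hf.mono Metric.sphere_subset_closedBall).meromorphicOn.circleIntegrable_log_norm
  have hgi := (hg.mono Metric.sphere_subset_closedBall).meromorphicOn.circleIntegrable_log_norm
  have hpf : CircleIntegrable (fun ζ => p * Real.log ‖f ζ‖) c r :=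
    IntervalIntegrable.const_mul hfi p
  have hag : CircleIntegrable (fun ζ => a * Real.log ‖g ζ‖) c r :=
    IntervalIntegrable.const_mul hgi a
  have hsum : CircleIntegrable (fun ζ => p * Real.log ‖f ζ‖ + a * Real.log ‖g ζ‖) c r :=
    IntervalIntegrable.add hpf hag
  have haverage : Real.circleAverage (fun ζ => p * Real.log ‖f ζ‖ + a * Real.log ‖g ζ‖) c r =
      p * Real.circleAverage (Real.log ‖f ·‖) c r +
        a * Real.circleAverage (Real.log ‖g ·‖) c r := by
    rw [Real.circleAverage_fun_add hpf hag]
    exact congrArg₂ _ (Real.circleAverage_fun_smul (a := p) (f := fun ζ => Real.log ‖f ζ‖))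
      (Real.circleAverage_fun_smul (a := a) (f := fun ζ => Real.log ‖g ζ‖))
  calc
    _ ≤ ENNReal.ofReal (Real.exp (Real.circleAverage
          (fun ζ => p * Real.log ‖f ζ‖ + a * Real.log ‖g ζ‖) c r)) := by
      rw [haverage, Real.exp_add, mul_comm p, Real.rpow_def_of_pos (norm_pos_iff.2 hfc)]
      gcongr
      exact log_norm_le_circleAverage_log_norm hf hfc
    _ ≤ _ := ofReal_exp_circleAverage_le_laverage hsum
    _ ≤ _ := by
      refine laverage_mono_ae (ae_restrict_of_ae ?_)
      filter_upwards [ae_circleMap_ne_zero hf hfc hr, ae_circleMap_ne_zero hg hgc hr] with θ hfθ hgθ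
      rw [Real.exp_add, mul_comm p, mul_comm a, ← Real.rpow_def_of_pos (norm_pos_iff.2 hfθ),
        ← Real.rpow_def_of_pos (norm_pos_iff.2 hgθ)]

end CircleAverages

section WeightedMeanValue

/-- The quadratic polynomial whose modulus is `|Re ζ|` on the circle of radius `r` about `z`:
if `u = ζ - z` has modulus `r`, then `2 Re ζ = 2 Re z + u + r² / u`. It turns the weight
`|Re ζ| ^ a` into the modulus of a holomorphic function. -/
noncomputable def circleRe (z : ℂ) (r : ℝ) (ζ : ℂ) : ℂ :=
  ((ζ - z) ^ 2 + 2 * z.re * (ζ - z) + r ^ 2) / (2 * r)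

variable {z : ℂ} {r R : ℝ}

lemma norm_circleRe_of_mem_sphere (hr : 0 < r) {ζ : ℂ} (hζ : ζ ∈ Metric.sphere z r) :
    ‖circleRe z r ζ‖ = |ζ.re| := by
  rw [mem_sphere_iff_norm] at hζ
  have hfactor : circleRe z r ζ = (ζ - z) / r * ζ.re := by
    have hr' : (r : ℂ) ≠ 0 := mod_cast hr.ne'
    have hconj : (r : ℂ) ^ 2 = (ζ - z) * starRingEnd ℂ (ζ - z) := by
      rw [Complex.mul_conj, Complex.normSq_eq_norm_sq, hζ]
      norm_cast
    have hre : (2 * ζ.re : ℂ) = 2 * z.re + (ζ - z) + starRingEnd ℂ (ζ - z) := by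
      rw [add_assoc, Complex.add_conj, Complex.sub_re]
      push_cast
      ring
    rw [circleRe, hconj]
    field_simp
    linear_combination -(ζ - z) * hre
  rw [hfactor, norm_mul, norm_div, hζ, Complex.norm_of_nonneg hr.le,
    div_self hr.ne', one_mul, Complex.norm_real, Real.norm_eq_abs]

lemma circleRe_self (hr : r ≠ 0) : circleRe z r z = r / 2 := by
  have hr' : (r : ℂ) ≠ 0 := mod_cast hr
  rw [circleRe, sub_self]
  field_simp
  ring

lemma analyticOnNhd_circleRe (s : Set ℂ) : AnalyticOnNhd ℂ (circleRe z r) s := by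
  have hdiff : Differentiable ℂ (circleRe z r) := by
    unfold circleRe
    fun_prop
  exact fun ζ _ => hdiff.analyticAt ζ

lemma abs_circleAverage_log_norm_circleRe_le (hR : 0 < R) (hr : r ∈ Ioo (R / 2) R) :
    |Real.circleAverage (Real.log ‖circleRe z r ·‖) z r| ≤ |Real.log (R / 4)| + |z.re| + R := by
  have hr0 : 0 < r := (half_pos hR).trans hr.1
  have hself : ‖circleRe z r z‖ = r / 2 := by
    rw [circleRe_self hr0.ne', norm_div, Complex.norm_of_nonneg hr0.le, Complex.norm_ofNat]
  refine abs_le.2 ⟨?_, ?_⟩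
  · calc -(|Real.log (R / 4)| + |z.re| + R) ≤ Real.log (R / 4) := by
          linarith [neg_abs_le (Real.log (R / 4)), abs_nonneg z.re]
      _ ≤ Real.log ‖circleRe z r z‖ := by
          rw [hself]
          exact Real.log_le_log (by positivity) (by linarith [hr.1])
      _ ≤ _ := log_norm_le_circleAverage_log_norm (analyticOnNhd_circleRe _) <| by
          rw [← norm_pos_iff, hself]
          positivity
  · refine Real.circleAverage_mono_on_of_le_circle
      (analyticOnNhd_circleRe _).meromorphicOn.circleIntegrable_log_norm fun ζ hζ => ?_
    rw [abs_of_pos hr0] at hζ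
    calc Real.log ‖circleRe z r ζ‖ ≤ |ζ.re| := by
          rw [norm_circleRe_of_mem_sphere hr0 hζ]
          exact Real.log_le_self (abs_nonneg _)
      _ ≤ |z.re| + |(ζ - z).re| := by
          simpa only [Complex.sub_re, add_sub_cancel] using abs_add_le z.re (ζ.re - z.re)
      _ ≤ |z.re| + R := by
          gcongr
          exact (Complex.abs_re_le_norm _).trans ((mem_sphere_iff_norm.1 hζ).trans_le hr.2.le)
      _ ≤ _ := by linarith [abs_nonneg (Real.log (R / 4))]

lemma exists_mul_norm_rpow_le_laverage_circle (hR : 0 < R) (z : ℂ) {p : ℝ} (hp : 0 < p) (a : ℝ) :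
    ∃ κ : ℝ, 0 < κ ∧ ∀ f : ℂ → ℂ, DifferentiableOn ℂ f (Metric.ball z R) → ∀ r ∈ Ioo (R / 2) R,
      ENNReal.ofReal (κ * ‖f z‖ ^ p) ≤ ⨍⁻ θ in Ioo (-Real.pi) Real.pi,
        ENNReal.ofReal (‖f (circleMap z r θ)‖ ^ p * |(circleMap z r θ).re| ^ a) ∂volume := by
  refine ⟨Real.exp (-(|a| * (|Real.log (R / 4)| + |z.re| + R))), Real.exp_pos _,
    fun f hf r hr => ?_⟩
  have hr0 : 0 < r := (half_pos hR).trans hr.1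
  rcases eq_or_ne (f z) 0 with hfz | hfz
  · simp [hfz, Real.zero_rpow hp.ne']
  have hfan : AnalyticOnNhd ℂ f (Metric.closedBall z |r|) :=
    (hf.analyticOnNhd Metric.isOpen_ball).mono <|
      Metric.closedBall_subset_ball (by rw [abs_of_pos hr0]; exact hr.2)
  have hself : circleRe z r z ≠ 0 := by
    rw [circleRe_self hr0.ne']
    exact div_ne_zero (mod_cast hr0.ne') two_ne_zero
  calc
    _ ≤ ENNReal.ofReal (‖f z‖ ^ p *
          Real.exp (a * Real.circleAverage (Real.log ‖circleRe z r ·‖) z r)) := by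
      rw [mul_comm]
      gcongr
      refine (neg_le_neg ?_).trans (neg_abs_le _)
      rw [abs_mul]
      exact mul_le_mul_of_nonneg_left (abs_circleAverage_log_norm_circleRe_le hR hr) (abs_nonneg a)
    _ ≤ _ := ofReal_norm_rpow_mul_exp_circleAverage_le hfan (analyticOnNhd_circleRe _) hfz hself
      hr0.ne' hp.le a
    _ = _ := by
      congr with θ
      rw [norm_circleRe_of_mem_sphere hr0 (circleMap_mem_sphere z hr0.le θ)]

lemma lintegral_eq_lintegral_lintegral_circleMap {G : ℂ → ℝ≥0∞} (hG : Measurable G) (z : ℂ) :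
    ∫⁻ ζ, G ζ = ∫⁻ r in Ioi 0, ENNReal.ofReal r *
      ∫⁻ θ in Ioo (-Real.pi) Real.pi, G (circleMap z r θ) := by
  have hpolar (q : ℝ × ℝ) : z + Complex.polarCoord.symm q = circleMap z q.1 q.2 := by
    rw [Complex.polarCoord_symm_apply, circleMap, Complex.exp_mul_I, Complex.ofReal_cos,
      Complex.ofReal_sin]
  have hmeas : Measurable fun q : ℝ × ℝ => G (circleMap z q.1 q.2) := by
    unfold circleMap
    fun_prop
  rw [← lintegral_add_left_eq_self G z, ← Complex.lintegral_comp_polarCoord_symm,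
    polarCoord_target, Measure.volume_eq_prod, ← Measure.prod_restrict]
  simp only [hpolar, smul_eq_mul]
  rw [lintegral_prod (fun q : ℝ × ℝ => ENNReal.ofReal q.1 * G (circleMap z q.1 q.2))
    (measurable_fst.ennreal_ofReal.mul hmeas).aemeasurable]
  exact lintegral_congr fun r => lintegral_const_mul' _ _ ENNReal.ofReal_ne_top

lemma measurable_indicator_ofReal_norm_rpow_mul {f : ℂ → ℂ} {s : Set ℂ} (hs : MeasurableSet s)
    (hf : ContinuousOn f s) (p a : ℝ) :
    Measurable (s.indicator fun ζ => ENNReal.ofReal (‖f ζ‖ ^ p * |ζ.re| ^ a)) := by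
  classical
  refine measurable_of_restrict_of_restrict_compl hs ?_ ?_
  · rw [← piecewise_eq_indicator, domRestrict_piecewise]
    have hfs := hf.domRestrict.measurable
    exact ((hfs.norm.pow_const p).mul (by fun_prop)).ennreal_ofReal
  · rw [← piecewise_eq_indicator, domRestrict_piecewise_compl]
    exact measurable_const

lemma exists_mul_norm_rpow_le_setLIntegral_ball (hR : 0 < R) (z : ℂ) {p : ℝ} (hp : 0 < p) (a : ℝ) :
    ∃ κ : ℝ, 0 < κ ∧ ∀ f : ℂ → ℂ, DifferentiableOn ℂ f (Metric.ball z R) →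
      ENNReal.ofReal (κ * ‖f z‖ ^ p) ≤
        ∫⁻ ζ in Metric.ball z R, ENNReal.ofReal (‖f ζ‖ ^ p * |ζ.re| ^ a) := by
  obtain ⟨κ, hκ, hcircle⟩ := exists_mul_norm_rpow_le_laverage_circle hR z hp a
  refine ⟨R / 2 * (2 * Real.pi * κ) * (R / 2), by positivity, fun f hf => ?_⟩
  set G := (Metric.ball z R).indicator fun ζ => ENNReal.ofReal (‖f ζ‖ ^ p * |ζ.re| ^ a)
  have hG : Measurable G :=
    measurable_indicator_ofReal_norm_rpow_mul Metric.isOpen_ball.measurableSet hf.continuousOn p a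
  have hinner {r : ℝ} (hr : r ∈ Ioo (R / 2) R) : ENNReal.ofReal (2 * Real.pi * κ * ‖f z‖ ^ p) ≤
      ∫⁻ θ in Ioo (-Real.pi) Real.pi, G (circleMap z r θ) := by
    have hball (θ : ℝ) : circleMap z r θ ∈ Metric.ball z R := by
      rw [Metric.mem_ball, dist_eq_norm, circleMap_sub_center, norm_circleMap_zero,
        abs_of_pos ((half_pos hR).trans hr.1)]
      exact hr.2
    rw [← measure_mul_laverage, Measure.restrict_apply_univ, Real.volume_Ioo, sub_neg_eq_add,
      ← two_mul, mul_assoc, ENNReal.ofReal_mul (by positivity)]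
    simp only [G, indicator_of_mem (hball _)]
    exact mul_le_mul_right (hcircle f hf r hr) _
  calc
    _ = ∫⁻ _ in Ioo (R / 2) R, ENNReal.ofReal (R / 2) *
          ENNReal.ofReal (2 * Real.pi * κ * ‖f z‖ ^ p) := by
      rw [setLIntegral_const, Real.volume_Ioo, sub_half, ← ENNReal.ofReal_mul (by positivity),
        ← ENNReal.ofReal_mul (by positivity)]
      ring_nf
    _ ≤ ∫⁻ r in Ioo (R / 2) R, ENNReal.ofReal r *
          ∫⁻ θ in Ioo (-Real.pi) Real.pi, G (circleMap z r θ) :=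
      setLIntegral_mono' measurableSet_Ioo fun r hr =>
        mul_le_mul' (ENNReal.ofReal_le_ofReal hr.1.le) (hinner hr)
    _ ≤ ∫⁻ r in Ioi 0, ENNReal.ofReal r *
          ∫⁻ θ in Ioo (-Real.pi) Real.pi, G (circleMap z r θ) :=
      lintegral_mono_set fun r hr => (half_pos hR).trans hr.1
    _ = _ := by
      rw [← lintegral_eq_lintegral_lintegral_circleMap hG,
        lintegral_indicator Metric.isOpen_ball.measurableSet]

end WeightedMeanValue

section Growth

lemma setLIntegral_im_preimage_le {s : Set ℝ} (hs : MeasurableSet s) {G : ℂ → ℝ≥0∞} {M : ℝ≥0∞}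
    (hG : ∀ y ∈ s, ∫⁻ x : ℝ, G (x + y * Complex.I) ≤ M) :
    ∫⁻ ζ in Complex.im ⁻¹' s, G ζ ≤ M * volume s := by
  calc
    _ = ∫⁻ q in univ ×ˢ s, G (Complex.measurableEquivRealProd.symm q) := by
      rw [← Complex.volume_preserving_equiv_real_prod.symm.setLIntegral_comp_preimage_emb
        Complex.measurableEquivRealProd.symm.measurableEmbedding]
      congr 2
      ext q
      simp
    _ = ∫⁻ q : ℝ × ℝ in s ×ˢ univ, G (q.2 + q.1 * Complex.I) := by
      rw [Measure.volume_eq_prod, ← Measure.prod_restrict, ← Measure.prod_restrict,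
        ← lintegral_prod_swap]
      simp only [Complex.measurableEquivRealProd_symm_apply, Complex.mk_eq_add_mul_I, Prod.fst_swap,
        Prod.snd_swap]
    _ ≤ ∫⁻ y in s, ∫⁻ x : ℝ, G (x + y * Complex.I) := by
      rw [Measure.volume_eq_prod, ← Measure.prod_restrict, Measure.restrict_univ]
      exact lintegral_prod_le _
    _ ≤ ∫⁻ _ in s, M := setLIntegral_mono' hs hG
    _ = M * volume s := setLIntegral_const s M

variable {p : ℝ}

lemma rpow_lintegral_line_le_hardyNorm (p a : ℝ) (f : ℂ → ℂ) {y : ℝ} (hy : 0 < y) :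
    (∫⁻ x : ℝ, ‖f (x + y * Complex.I)‖ₑ ^ p * ENNReal.ofReal (|x| ^ a)) ^ (1 / p) ≤
      hardyNorm p a f :=
  le_iSup₂ (f := fun (y : ℝ) (_ : y ∈ Ioi (0 : ℝ)) =>
    (∫⁻ x : ℝ, ‖f (x + y * Complex.I)‖ₑ ^ p * ENNReal.ofReal (|x| ^ a)) ^ (1 / p)) y hy

lemma lintegral_line_le_hardyNorm_rpow (hp : 0 < p) (a : ℝ) (f : ℂ → ℂ) {y : ℝ} (hy : 0 < y) :
    ∫⁻ x : ℝ, ENNReal.ofReal (‖f (x + y * Complex.I)‖ ^ p * |((x : ℂ) + y * Complex.I).re| ^ a) ≤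
      hardyNorm p a f ^ p := by
  rw [← ENNReal.rpow_inv_le_iff hp, ← one_div]
  refine le_of_eq_of_le ?_ (rpow_lintegral_line_le_hardyNorm p a f hy)
  congr with x
  rw [ENNReal.ofReal_mul (by positivity), ← ENNReal.ofReal_rpow_of_nonneg (norm_nonneg _) hp.le,
    ofReal_norm, ← Complex.mk_eq_add_mul_I]

lemma exists_enorm_le_mul_hardyNorm (hp : 0 < p) (a : ℝ) {z : ℂ} (hz : z ∈ upperHalf) :
    ∃ C : ℝ≥0, ∀ f : ℂ → ℂ, DifferentiableOn ℂ f upperHalf → ‖f z‖ₑ ≤ C * hardyNorm p a f := by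
  have him : 0 < z.im := hz
  obtain ⟨κ, hκ, hball⟩ := exists_mul_norm_rpow_le_setLIntegral_ball him z hp a
  have hsub : Metric.ball z z.im ⊆ Complex.im ⁻¹' Ioo 0 (2 * z.im) := fun ζ hζ => by
    have h := (Complex.abs_im_le_norm (ζ - z)).trans_lt (mem_ball_iff_norm.1 hζ)
    rw [Complex.sub_im, abs_lt] at h
    constructor <;> linarith
  refine ⟨(2 * z.im / κ).toNNReal ^ p⁻¹, fun f hf => ?_⟩
  have hle : ENNReal.ofReal κ * ‖f z‖ₑ ^ p ≤ ENNReal.ofReal (2 * z.im) * hardyNorm p a f ^ p := by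
    calc
      _ = ENNReal.ofReal (κ * ‖f z‖ ^ p) := by
        rw [ENNReal.ofReal_mul hκ.le, ← ENNReal.ofReal_rpow_of_nonneg (norm_nonneg _) hp.le,
          ofReal_norm]
      _ ≤ ∫⁻ ζ in Metric.ball z z.im, ENNReal.ofReal (‖f ζ‖ ^ p * |ζ.re| ^ a) :=
        hball f (hf.mono fun ζ hζ => (hsub hζ).1)
      _ ≤ ∫⁻ ζ in Complex.im ⁻¹' Ioo 0 (2 * z.im), ENNReal.ofReal (‖f ζ‖ ^ p * |ζ.re| ^ a) :=
        lintegral_mono_set hsub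
      _ ≤ hardyNorm p a f ^ p * volume (Ioo 0 (2 * z.im)) :=
        setLIntegral_im_preimage_le measurableSet_Ioo fun y hy =>
          lintegral_line_le_hardyNorm_rpow hp a f hy.1
      _ = _ := by rw [Real.volume_Ioo, sub_zero, mul_comm]
  rw [← ENNReal.rpow_le_rpow_iff hp, ENNReal.mul_rpow_of_nonneg _ _ hp.le,
    ← ENNReal.coe_rpow_of_nonneg _ hp.le, NNReal.rpow_inv_rpow hp.ne']
  change _ ≤ ENNReal.ofReal (2 * z.im / κ) * _
  rw [ENNReal.ofReal_div_of_pos hκ, ← ENNReal.mul_div_right_comm,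
    ENNReal.le_div_iff_mul_le (.inl (by simpa using hκ)) (.inl ENNReal.ofReal_ne_top), mul_comm]
  exact hle

lemma lintegral_comp_mul_left (g : ℝ → ℝ≥0∞) {r : ℝ} (hr : r ≠ 0) :
    ∫⁻ x, g (r * x) = ENNReal.ofReal |r⁻¹| * ∫⁻ x, g x := by
  rw [← smul_eq_mul, ← lintegral_smul_measure, ← Real.map_volume_mul_left hr]
  exact ((Homeomorph.mulLeft₀ r hr).measurableEmbedding.lintegral_map g).symm

lemma hardyNorm_comp_ofReal_mul_le (hp : 0 < p) (a : ℝ) (f : ℂ → ℂ) {r : ℝ} (hr : 0 < r) :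
    hardyNorm p a (fun w => f (r * w)) ≤
      ENNReal.ofReal (r ^ (-((a + 1) / p))) * hardyNorm p a f := by
  refine iSup₂_le fun y hy => ?_
  have hry : 0 < r * y := mul_pos hr hy
  have hpoint (x : ℝ) : ‖f (r * (x + y * Complex.I))‖ₑ ^ p * ENNReal.ofReal (|x| ^ a) =
      ENNReal.ofReal (r ^ (-a)) * (‖f (((r * x : ℝ) : ℂ) + (r * y : ℝ) * Complex.I)‖ₑ ^ p *
        ENNReal.ofReal (|r * x| ^ a)) := by
    rw [mul_left_comm, ← ENNReal.ofReal_mul (by positivity), abs_mul, abs_of_pos hr,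
      Real.mul_rpow hr.le (abs_nonneg x), ← mul_assoc, ← Real.rpow_add hr, neg_add_cancel,
      Real.rpow_zero, one_mul]
    push_cast
    ring_nf
  calc
    _ = (∫⁻ x : ℝ, ‖f (r * (x + y * Complex.I))‖ₑ ^ p * ENNReal.ofReal (|x| ^ a)) ^ (1 / p) := rfl
    _ = (ENNReal.ofReal (r ^ (-(a + 1))) * ∫⁻ x : ℝ,
          ‖f (x + (r * y : ℝ) * Complex.I)‖ₑ ^ p * ENNReal.ofReal (|x| ^ a)) ^ (1 / p) := by
      simp_rw [hpoint]
      rw [lintegral_const_mul' _ _ ENNReal.ofReal_ne_top, lintegral_comp_mul_left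
        (fun x : ℝ => ‖f (x + (r * y : ℝ) * Complex.I)‖ₑ ^ p * ENNReal.ofReal (|x| ^ a)) hr.ne',
        ← mul_assoc, ← ENNReal.ofReal_mul (by positivity), abs_of_pos (inv_pos.2 hr), neg_add,
        Real.rpow_add hr, Real.rpow_neg_one]
    _ = ENNReal.ofReal (r ^ (-((a + 1) / p))) * (∫⁻ x : ℝ,
          ‖f (x + (r * y : ℝ) * Complex.I)‖ₑ ^ p * ENNReal.ofReal (|x| ^ a)) ^ (1 / p) := by
      rw [ENNReal.mul_rpow_of_nonneg _ _ (by positivity),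
        ENNReal.ofReal_rpow_of_pos (by positivity), ← Real.rpow_mul hr.le, neg_mul, mul_one_div]
    _ ≤ _ := by
      gcongr
      exact rpow_lintegral_line_le_hardyNorm p a f hry

lemma exists_norm_comp_ofReal_mul_le (hp : 0 < p) {a : ℝ} {f : ℂ → ℂ}
    (hf : DifferentiableOn ℂ f upperHalf) (hnorm : hardyNorm p a f < ∞) {z : ℂ}
    (hz : z ∈ upperHalf) :
    ∃ B : ℝ, ∀ r : ℝ, 0 < r → ‖f (r * z)‖ ≤ B * r ^ (-((a + 1) / p)) := by
  obtain ⟨C, hC⟩ := exists_enorm_le_mul_hardyNorm hp a hz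
  refine ⟨C * (hardyNorm p a f).toReal, fun r hr => ?_⟩
  have hdilate : DifferentiableOn ℂ (fun w => f (r * w)) upperHalf :=
    hf.comp (by fun_prop) fun w hw => by
      change 0 < (r * w).im
      rw [Complex.im_ofReal_mul]
      exact mul_pos hr hw
  have hle := (hC _ hdilate).trans (mul_le_mul_right (hardyNorm_comp_ofReal_mul_le hp a f hr) _)
  have hreal := ENNReal.toReal_mono (by finiteness) hle
  simp only [ENNReal.toReal_mul, toReal_enorm, ENNReal.coe_toReal] at hreal
  rw [ENNReal.toReal_ofReal (by positivity)] at hreal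
  linarith

end Growth

section BoundedConvolution

variable {𝕜 H : Type*} [RCLike 𝕜] [AddCommGroup H] [MeasurableSpace H] {μ : Measure H}
  {k q G : H → 𝕜}

lemma bddAbove_range_norm_convolution_mul (hk : Integrable k μ)
    (hb : BddAbove (range fun x => ‖G x‖)) :
    BddAbove (range fun x => ‖(k ⋆[.mul 𝕜 𝕜, μ] G) x‖) := by
  obtain ⟨B, hB⟩ := hb
  refine ⟨(∫ t, ‖k t‖ ∂μ) * B, forall_mem_range.2 fun x => ?_⟩
  rw [convolution_mul, ← integral_mul_const]
  refine norm_integral_le_of_norm_le (hk.norm.mul_const B) (.of_forall fun t => ?_)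
  rw [norm_mul]
  exact mul_le_mul_of_nonneg_left (hB ⟨x - t, rfl⟩) (norm_nonneg _)

lemma convolution_mul_comm [MeasurableAdd H] [MeasurableNeg H] [μ.IsAddLeftInvariant]
    [μ.IsNegInvariant] (q k : H → 𝕜) : q ⋆[.mul 𝕜 𝕜, μ] k = k ⋆[.mul 𝕜 𝕜, μ] q := by
  rw [← convolution_flip, ContinuousLinearMap.flip_mul]

variable [TopologicalSpace H] [IsTopologicalAddGroup H] [SecondCountableTopology H] [BorelSpace H]

lemma convolutionExists_mul_of_bddAbove (hk : Integrable k μ) (hG : Continuous G)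
    (hb : BddAbove (range fun x => ‖G x‖)) : ConvolutionExists k G (.mul 𝕜 𝕜) μ := by
  obtain ⟨B, hB⟩ := hb
  exact fun x => hk.mul_bdd (c := B) (by fun_prop) (.of_forall fun t => hB ⟨x - t, rfl⟩)

variable [SFinite μ] [μ.IsAddLeftInvariant]

lemma convolution_mul_assoc_of_bddAbove (hq : Integrable q μ) (hk : Integrable k μ)
    (hG : Continuous G) (hb : BddAbove (range fun x => ‖G x‖)) :
    (q ⋆[.mul 𝕜 𝕜, μ] k) ⋆[.mul 𝕜 𝕜, μ] G = q ⋆[.mul 𝕜 𝕜, μ] (k ⋆[.mul 𝕜 𝕜, μ] G) := by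
  have hb' : BddAbove (range fun x => ‖‖G x‖‖) := by simpa only [norm_norm] using hb
  ext x
  exact convolution_assoc _ _ _ _ mul_assoc hq.aestronglyMeasurable hk.aestronglyMeasurable
    hG.aestronglyMeasurable (hq.ae_convolution_exists _ hk)
    (.of_forall (convolutionExists_mul_of_bddAbove hk.norm hG.norm hb'))
    (convolutionExists_mul_of_bddAbove hq.norm
      (hb'.continuous_convolution_right_of_integrable _ hk.norm hG.norm)
      (bddAbove_range_norm_convolution_mul hk.norm hb') x)

variable {l : 𝕜}

lemma smul_convolution_eq_of_resolvent (hk : Integrable k μ) (hq : Integrable q μ)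
    (hqk : ∀ᵐ x ∂μ, l * q x = k x + (q ⋆[.mul 𝕜 𝕜, μ] k) x) (hG : Continuous G)
    (hb : BddAbove (range fun x => ‖G x‖)) :
    l • (q ⋆[.mul 𝕜 𝕜, μ] G) = k ⋆[.mul 𝕜 𝕜, μ] G + q ⋆[.mul 𝕜 𝕜, μ] (k ⋆[.mul 𝕜 𝕜, μ] G) := by
  rw [← convolution_mul_assoc_of_bddAbove hq hk hG hb,
    ← (convolutionExists_mul_of_bddAbove hk hG hb).add_distrib
      (convolutionExists_mul_of_bddAbove (hq.integrable_convolution _ hk) hG hb),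
    ← smul_convolution]
  exact convolution_congr _ hqk .rfl

lemma sub_convolution_add_convolution_eq_smul (hk : Integrable k μ) (hq : Integrable q μ)
    (hqk : ∀ᵐ x ∂μ, l * q x = k x + (q ⋆[.mul 𝕜 𝕜, μ] k) x) (hG : Continuous G)
    (hb : BddAbove (range fun x => ‖G x‖)) :
    l • G - k ⋆[.mul 𝕜 𝕜, μ] G + q ⋆[.mul 𝕜 𝕜, μ] (l • G - k ⋆[.mul 𝕜 𝕜, μ] G) = l • G := by
  have hqG := convolutionExists_mul_of_bddAbove hq hG hb
  have hqkG := convolutionExists_mul_of_bddAbove hq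
    (hb.continuous_convolution_right_of_integrable (.mul 𝕜 𝕜) hk hG)
    (bddAbove_range_norm_convolution_mul hk hb)
  have hqd : ConvolutionExists q (l • G - k ⋆[.mul 𝕜 𝕜, μ] G) (.mul 𝕜 𝕜) μ := fun x =>
    (((hqG x).smul l).sub (hqkG x)).congr (.of_forall fun t => by simp; ring)
  have hsplit := hqd.distrib_add hqkG
  rw [sub_add_cancel, convolution_smul, smul_convolution_eq_of_resolvent hk hq hqk hG hb,
    add_left_inj] at hsplit
  rw [← hsplit, sub_add_cancel]

lemma smul_add_convolution_sub_convolution_eq_smul [μ.IsNegInvariant] (hk : Integrable k μ)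
    (hq : Integrable q μ) (hqk : ∀ᵐ x ∂μ, l * q x = k x + (q ⋆[.mul 𝕜 𝕜, μ] k) x)
    (hG : Continuous G) (hb : BddAbove (range fun x => ‖G x‖)) :
    l • (G + q ⋆[.mul 𝕜 𝕜, μ] G) - k ⋆[.mul 𝕜 𝕜, μ] (G + q ⋆[.mul 𝕜 𝕜, μ] G) = l • G := by
  have hqG := hb.continuous_convolution_right_of_integrable (.mul 𝕜 𝕜) hq hG
  rw [(convolutionExists_mul_of_bddAbove hk hG hb).distrib_add
      (convolutionExists_mul_of_bddAbove hk hqG (bddAbove_range_norm_convolution_mul hq hb)),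
    ← convolution_mul_assoc_of_bddAbove hk hq hG hb, convolution_mul_comm k q,
    convolution_mul_assoc_of_bddAbove hq hk hG hb,
    ← smul_convolution_eq_of_resolvent hk hq hqk hG hb, smul_add, add_sub_cancel_right]

end BoundedConvolution

section Rays

lemma integral_Ioi_zero_eq_integral_exp_smul {E : Type*} [NormedAddCommGroup E] [NormedSpace ℝ E]
    (g : ℝ → E) : ∫ t in Ioi 0, g t = ∫ s, Real.exp s • g (Real.exp s) := by
  have h := integral_image_eq_integral_abs_deriv_smul MeasurableSet.univ
    (fun x _ => (Real.hasDerivAt_exp x).hasDerivWithinAt) Real.exp_injective.injOn g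
  simpa only [image_univ, Real.range_exp, Measure.restrict_univ, Real.abs_exp] using h

lemma integrableOn_Ioi_zero_iff_integrable_exp_smul {E : Type*} [NormedAddCommGroup E]
    [NormedSpace ℝ E] (g : ℝ → E) :
    IntegrableOn g (Ioi 0) ↔ Integrable fun s => Real.exp s • g (Real.exp s) := by
  have h := integrableOn_image_iff_integrableOn_abs_deriv_smul MeasurableSet.univ
    (fun x _ => (Real.hasDerivAt_exp x).hasDerivWithinAt) Real.exp_injective.injOn g
  simpa only [image_univ, Real.range_exp, integrableOn_univ, Real.abs_exp] using h

/-- The kernel `φ` on the multiplicative group `(0, ∞)` in the logarithmic coordinate `s = log t`,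
with the weight `t ^ c` absorbed: its Fourier transform is the Mellin transform of `φ` on the line
`Re = c`. -/
noncomputable def mellinKernel (φ : ℝ → ℂ) (c s : ℝ) : ℂ :=
  φ (Real.exp s) * (Real.exp (c * s) : ℂ)

/-- The restriction of `F` to the ray through `z` in the logarithmic coordinate `x`, weighted by
`e ^ (c * x)`; the value at `x = 0` is `F z`. -/
noncomputable def rayProfile (c : ℝ) (z : ℂ) (F : ℂ → ℂ) (x : ℝ) : ℂ :=
  F ((Real.exp x : ℂ) * z) * (Real.exp (c * x) : ℂ)

variable {φ : ℝ → ℂ} {c : ℝ}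

lemma integrableOn_norm_mul_rpow_iff_integrable_mellinKernel (hφ : Measurable φ) :
    IntegrableOn (fun t => ‖φ t‖ * t ^ (c - 1)) (Ioi 0) ↔ Integrable (mellinKernel φ c) := by
  have hmeas : Measurable (mellinKernel φ c) :=
    (hφ.comp Real.measurable_exp).mul (by fun_prop)
  rw [integrableOn_Ioi_zero_iff_integrable_exp_smul,
    ← integrable_norm_iff hmeas.aestronglyMeasurable]
  congr! 2 with s
  rw [mellinKernel, norm_mul, Complex.norm_real, Real.norm_of_nonneg (Real.exp_pos _).le,
    smul_eq_mul, mul_left_comm, ← Real.exp_mul, ← Real.exp_add]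
  ring_nf

lemma fourier_mellinKernel (φ : ℝ → ℂ) (c ξ : ℝ) :
    𝓕 (mellinKernel φ c) ξ = khat φ c (2 * Real.pi * ξ) := by
  rw [khat, integral_Ioi_zero_eq_integral_exp_smul, Real.fourier_real_eq_integral_exp_smul]
  congr with s
  have hexp : (Real.exp s : ℂ) ≠ 0 := by exact_mod_cast (Real.exp_pos s).ne'
  rw [Complex.cpow_def_of_ne_zero hexp, ← Complex.ofReal_log (Real.exp_pos s).le, Real.log_exp,
    mellinKernel, smul_eq_mul, Complex.real_smul, Complex.ofReal_exp, Complex.ofReal_exp,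
    mul_left_comm, mul_left_comm (Complex.exp s), ← Complex.exp_add, ← Complex.exp_add]
  congr 2
  push_cast
  ring

lemma range_fourier_mellinKernel (φ : ℝ → ℂ) (c : ℝ) :
    range (𝓕 (mellinKernel φ c)) = range (khat φ c) := by
  have hcomp : 𝓕 (mellinKernel φ c) = khat φ c ∘ (2 * Real.pi * ·) :=
    funext (fourier_mellinKernel φ c)
  rw [hcomp, (mul_left_surjective₀ Real.two_pi_pos.ne').range_comp]

lemma exists_measurable_mellinKernel_eq {q : ℝ → ℂ} (hq : Measurable q) (c : ℝ) :
    ∃ ψ : ℝ → ℂ, Measurable ψ ∧ mellinKernel ψ c = q := by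
  refine ⟨fun t => q (Real.log t) * (Real.exp (-(c * Real.log t)) : ℂ),
    (hq.comp Real.measurable_log).mul (by fun_prop), funext fun s => ?_⟩
  rw [mellinKernel, Real.log_exp, mul_assoc, ← Complex.ofReal_mul, ← Real.exp_add, neg_add_cancel,
    Real.exp_zero, Complex.ofReal_one, mul_one]

lemma eq_of_rayProfile_eq {z : ℂ} {F G : ℂ → ℂ} (h : rayProfile c z F = rayProfile c z G) :
    F z = G z := by
  simpa [rayProfile] using congr_fun h 0

lemma rayProfile_add (c : ℝ) (z : ℂ) (F G : ℂ → ℂ) :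
    rayProfile c z (F + G) = rayProfile c z F + rayProfile c z G :=
  funext fun _ => add_mul _ _ _

lemma rayProfile_sub (c : ℝ) (z : ℂ) (F G : ℂ → ℂ) :
    rayProfile c z (F - G) = rayProfile c z F - rayProfile c z G :=
  funext fun _ => sub_mul _ _ _

lemma rayProfile_smul (c : ℝ) (z l : ℂ) (F : ℂ → ℂ) :
    rayProfile c z (l • F) = l • rayProfile c z F :=
  funext fun _ => mul_assoc _ _ _

lemma rayProfile_HphiHol (c : ℝ) (z : ℂ) (φ : ℝ → ℂ) (F : ℂ → ℂ) :
    rayProfile c z (HphiHol φ F) = mellinKernel φ c ⋆[.mul ℂ ℂ] rayProfile c z F := by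
  ext x
  rw [convolution_mul, rayProfile, HphiHol, integral_Ioi_zero_eq_integral_exp_smul,
    ← integral_mul_const]
  congr with s
  have hexp : (Real.exp s : ℂ) ≠ 0 := by exact_mod_cast (Real.exp_pos s).ne'
  have hray : (Real.exp x : ℂ) * z / Real.exp s = (Real.exp (x - s) : ℂ) * z := by
    rw [Real.exp_sub]
    push_cast
    ring
  have hweight : (Real.exp (c * x) : ℂ) = Real.exp (c * s) * Real.exp (c * (x - s)) := by
    rw [← Complex.ofReal_mul, ← Real.exp_add]
    ring_nf
  rw [hray, hweight, Complex.real_smul, mellinKernel, rayProfile]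
  field_simp

lemma continuous_rayProfile (c : ℝ) {z : ℂ} (hz : z ∈ upperHalf) {f : ℂ → ℂ}
    (hf : ContinuousOn f upperHalf) : Continuous (rayProfile c z f) := by
  refine (hf.comp_continuous (by fun_prop) fun x => ?_).mul (by fun_prop)
  change 0 < ((Real.exp x : ℂ) * z).im
  rw [Complex.im_ofReal_mul]
  exact mul_pos (Real.exp_pos x) hz

lemma bddAbove_range_norm_rayProfile {p a : ℝ} (hp : 0 < p) {f : ℂ → ℂ}
    (hf : DifferentiableOn ℂ f upperHalf) (hnorm : hardyNorm p a f < ∞) {z : ℂ}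
    (hz : z ∈ upperHalf) : BddAbove (range fun x => ‖rayProfile ((a + 1) / p) z f x‖) := by
  obtain ⟨B, hB⟩ := exists_norm_comp_ofReal_mul_le hp hf hnorm hz
  refine ⟨B, forall_mem_range.2 fun x => ?_⟩
  rw [rayProfile, norm_mul, Complex.norm_real, Real.norm_of_nonneg (Real.exp_pos _).le]
  calc
    _ ≤ B * Real.exp x ^ (-((a + 1) / p)) * Real.exp ((a + 1) / p * x) := by
      gcongr
      exact hB _ (Real.exp_pos x)
    _ = B := by
      rw [← Real.exp_mul, mul_assoc, ← Real.exp_add, mul_neg, mul_comm x, neg_add_cancel,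
        Real.exp_zero, mul_one]

theorem exists_HphiHol_resolvent (hφm : Measurable φ)
    (hφ : IntegrableOn (fun t => ‖φ t‖ * t ^ (c - 1)) (Ioi 0)) {l : ℂ}
    (hl : l ∉ closure (range (khat φ c))) :
    ∃ ψ : ℝ → ℂ, Measurable ψ ∧ IntegrableOn (fun t => ‖ψ t‖ * t ^ (c - 1)) (Ioi 0) ∧
      ∀ (f : ℂ → ℂ) (z : ℂ), Continuous (rayProfile c z f) →
        BddAbove (range fun x => ‖rayProfile c z f x‖) →
        (l⁻¹ • (l • f - HphiHol φ f + HphiHol ψ (l • f - HphiHol φ f))) z = f z ∧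
        (l • l⁻¹ • (f + HphiHol ψ f) - HphiHol φ (l⁻¹ • (f + HphiHol ψ f))) z = f z := by
  have hk := (integrableOn_norm_mul_rpow_iff_integrable_mellinKernel hφm).1 hφ
  rw [← range_fourier_mellinKernel] at hl
  have hl₀ := ne_zero_of_notMem_closure_range_fourier hl
  obtain ⟨q, hqm, hq, hqk⟩ := exists_integrable_mul_eq_add_convolution hk hl
  obtain ⟨ψ, hψm, rfl⟩ := exists_measurable_mellinKernel_eq hqm c
  refine ⟨ψ, hψm, (integrableOn_norm_mul_rpow_iff_integrable_mellinKernel hψm).2 hq,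
    fun f z hG hb => ⟨eq_of_rayProfile_eq (c := c) ?_, eq_of_rayProfile_eq (c := c) ?_⟩⟩
  · rw [rayProfile_smul, rayProfile_add, rayProfile_HphiHol, rayProfile_sub, rayProfile_smul,
      rayProfile_HphiHol, sub_convolution_add_convolution_eq_smul hk hq hqk hG hb,
      inv_smul_smul₀ hl₀]
  · rw [rayProfile_sub, rayProfile_HphiHol, rayProfile_smul, rayProfile_smul, convolution_smul,
      smul_comm, ← smul_sub, rayProfile_add, rayProfile_HphiHol,
      smul_add_convolution_sub_convolution_eq_smul hk hq hqk hG hb, inv_smul_smul₀ hl₀]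

end Rays

theorem stmt9_general (p a : ℝ) (hp : 0 < p) (φ : ℝ → ℂ) (hφm : Measurable φ)
    (hφ : IntegrableOn (fun t => ‖φ t‖ * t ^ ((a + 1) / p - 1)) (Set.Ioi (0 : ℝ)))
    (l : ℂ) (hl : l ∉ closure (Set.range (khat φ ((a + 1) / p)))) :
    ∃ ψ : ℝ → ℂ, Measurable ψ ∧
      IntegrableOn (fun t => ‖ψ t‖ * t ^ ((a + 1) / p - 1)) (Set.Ioi (0 : ℝ)) ∧
      ∀ f : ℂ → ℂ, DifferentiableOn ℂ f upperHalf → hardyNorm p a f < ⊤ →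
        (∀ z ∈ upperHalf,
          (1 / l) * ((fun w => l * f w - HphiHol φ f w) z +
            HphiHol ψ (fun w => l * f w - HphiHol φ f w) z) = f z) ∧
        (∀ z ∈ upperHalf,
          l * ((fun w => (1 / l) * (f w + HphiHol ψ f w)) z) -
            HphiHol φ (fun w => (1 / l) * (f w + HphiHol ψ f w)) z = f z) := by
  obtain ⟨ψ, hψm, hψ, hres⟩ := exists_HphiHol_resolvent hφm hφ hl
  refine ⟨ψ, hψm, hψ, fun f hf hnorm => ?_⟩
  have hray (z : ℂ) (hz : z ∈ upperHalf) := hres f z (continuous_rayProfile _ hz hf.continuousOn)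
    (bddAbove_range_norm_rayProfile hp hf hnorm hz)
  rw [one_div]
  exact ⟨fun z hz => (hray z hz).1, fun z hz => (hray z hz).2⟩

/-- For `l` outside the closure of the range of `k̂_{a,p}`, there is a
measurable `ψ` with `∫₀^∞ |ψ(t)| t^{(a+1)/p −1} dt < ∞` such that for every holomorphic `f`
on `𝕌` with finite weighted Hardy norm, `(1/l)(g + ℋ_ψ g) = f` where `g = l f − ℋ_φ f`, and
`l h − ℋ_φ h = f` where `h = (1/l)(f + ℋ_ψ f)`, at every point of `𝕌`. -/
theorem stmt9 (p a : ℝ) (hp : 1 ≤ p) (ha : -1 < a) (φ : ℝ → ℂ) (hφm : Measurable φ)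
    (hφ : IntegrableOn (fun t => ‖φ t‖ * t ^ ((a + 1) / p - 1)) (Set.Ioi (0 : ℝ)))
    (l : ℂ) (hl : l ∉ closure (Set.range (khat φ ((a + 1) / p)))) :
    ∃ ψ : ℝ → ℂ, Measurable ψ ∧
      IntegrableOn (fun t => ‖ψ t‖ * t ^ ((a + 1) / p - 1)) (Set.Ioi (0 : ℝ)) ∧
      ∀ f : ℂ → ℂ, DifferentiableOn ℂ f upperHalf → hardyNorm p a f < ⊤ →
        (∀ z ∈ upperHalf,
          (1 / l) * ((fun w => l * f w - HphiHol φ f w) z +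
            HphiHol ψ (fun w => l * f w - HphiHol φ f w) z) = f z) ∧
        (∀ z ∈ upperHalf,
          l * ((fun w => (1 / l) * (f w + HphiHol ψ f w)) z) -
            HphiHol φ (fun w => (1 / l) * (f w + HphiHol ψ f w)) z = f z) :=
  stmt9_general p a (by linarith) φ hφm hφ l hl
end

section
/- Let 1 ≤ p < ∞, a > −1, and let φ : (0,∞) → ℂ be measurable with ∫₀^∞ |φ(t)| t^{(a+1)/p − 1} dt < ∞. For ξ ∈ ℝ and ε ∈ (0,1), let f_{ε,ξ}(z) = (z+i)^{−(a+1)/p − ε + iξ} (principal branch) for z ∈ 𝕌. Then ‖f_{ε,ξ}‖_{H^p_{|·|^a}} < ∞ and, for each fixed ξ ∈ ℝ, lim_{ε→0⁺} ‖ℋ_φ f_{ε,ξ} − k̂_{a,p}(ξ)·f_{ε,ξ}‖_{H^p_{|·|^a}} / ‖f_{ε,ξ}‖_{H^p_{|·|^a}} = 0. -/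
open MeasureTheory Filter
open scoped ENNReal NNReal Topology

/-- The test function `f_{ε,ξ}(z) = (z+i)^{−c − ε + iξ}` (principal branch), `c = (a+1)/p`. -/
noncomputable def testFun (c ε ξ : ℝ) (z : ℂ) : ℂ :=
  (z + Complex.I) ^ (((-c - ε : ℝ) : ℂ) + Complex.I * (ξ : ℂ))

/-!
With `c = (a + 1) / p`, the function `ℋ_φ f - k̂(ξ) f` is the integral of
`φ(t) t⁻¹ (f(z/t) - t^(c - iξ) f(z))` over `t`, so by Minkowski's integral inequality its norm is at
most `∫ |φ(t)| t⁻¹ ‖f(·/t) - t^(c - iξ) f‖ dt`. Dilation by `t` scales the norm by `t^c`, hence the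
inner norm is at most `2 t^c ‖f‖`. For `f = f_{ε,ξ}` it is also at most
`t^c (|1 - t^(-ε)| ‖f‖ + A(t))` with `A(t)` independent of `ε`, because moving the singularity from
`-i` to `-it` changes `f_{ε,ξ}` only by `O(|z + i|^(-c - 1))`. Since `|x|⁻¹` is not integrable at
infinity, `‖f_{ε,ξ}‖ → ∞` as `ε → 0` by Fatou's lemma, and dominated convergence concludes.
-/

section Minkowski

variable {α β : Type*} [MeasurableSpace α] [MeasurableSpace β] {μ : Measure α} {ν : Measure β}

lemma rpow_lintegral_mul_le {p : ℝ} (hp : 1 ≤ p) {w h : β → ℝ≥0∞} (hw : AEMeasurable w ν)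
    (hh : AEMeasurable h ν) :
    (∫⁻ t, w t * h t ∂ν) ^ p ≤ (∫⁻ t, w t ∂ν) ^ (p - 1) * ∫⁻ t, w t * h t ^ p ∂ν := by
  have hp0 : 0 < p := by positivity
  have hq : 0 ≤ 1 - 1 / p := sub_nonneg.2 ((div_le_one hp0).2 hp)
  have split : ∀ t, w t * h t = w t ^ (1 - 1 / p) * (w t * h t ^ p) ^ (1 / p) := fun t => by
    rw [ENNReal.mul_rpow_of_nonneg _ _ (by positivity), ← mul_assoc,
      ← ENNReal.rpow_add_of_nonneg _ _ hq (by positivity), ← ENNReal.rpow_mul,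
      mul_one_div_cancel hp0.ne', sub_add_cancel, ENNReal.rpow_one, ENNReal.rpow_one]
  calc (∫⁻ t, w t * h t ∂ν) ^ p
      ≤ ((∫⁻ t, w t ∂ν) ^ (1 - 1 / p) * (∫⁻ t, w t * h t ^ p ∂ν) ^ (1 / p)) ^ p := by
        simp_rw [split]
        gcongr
        exact ENNReal.lintegral_mul_norm_pow_le hw (hw.mul (hh.pow_const p)) hq (by positivity)
          (by ring)
    _ = (∫⁻ t, w t ∂ν) ^ (p - 1) * ∫⁻ t, w t * h t ^ p ∂ν := by
        rw [ENNReal.mul_rpow_of_nonneg _ _ hp0.le, ← ENNReal.rpow_mul, ← ENNReal.rpow_mul,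
          one_div_mul_cancel hp0.ne', ENNReal.rpow_one, sub_mul, one_mul,
          one_div_mul_cancel hp0.ne']

variable [SFinite μ]

lemma lintegral_rpow_lintegral_le_of_lintegral_rpow_le [SFinite ν] {p : ℝ} (hp : 1 ≤ p)
    {f : α → β → ℝ≥0∞} (hf : Measurable (Function.uncurry f)) {W : β → ℝ≥0∞}
    (hW : AEMeasurable W ν) (hW0 : ∀ t, W t ≠ 0) (hWtop : ∀ᵐ t ∂ν, W t ≠ ⊤)
    (hfW : ∀ t, ∫⁻ x, f x t ^ p ∂μ ≤ W t ^ p) :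
    ∫⁻ x, (∫⁻ t, f x t ∂ν) ^ p ∂μ ≤ (∫⁻ t, W t ∂ν) ^ p := by
  have hp0 : 0 < p := by positivity
  have hfx : ∀ x, Measurable (f x) := fun x => hf.of_uncurry_left
  have normalized : ∀ᵐ t ∂ν, ∫⁻ x, W t * (f x t / W t) ^ p ∂μ ≤ W t := by
    filter_upwards [hWtop] with t ht
    have hWp0 : W t ^ p ≠ 0 := (ENNReal.rpow_pos (hW0 t).bot_lt ht).ne'
    calc ∫⁻ x, W t * (f x t / W t) ^ p ∂μ = W t * ((∫⁻ x, f x t ^ p ∂μ) / W t ^ p) := by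
          simp_rw [ENNReal.div_rpow_of_nonneg _ _ hp0.le, div_eq_mul_inv]
          rw [lintegral_const_mul' _ _ ht,
            lintegral_mul_const' _ _ (ENNReal.inv_ne_top.2 hWp0)]
      _ ≤ W t * 1 := by
          gcongr
          exact ENNReal.div_le_of_le_mul (by simpa using hfW t)
      _ = W t := mul_one _
  calc ∫⁻ x, (∫⁻ t, f x t ∂ν) ^ p ∂μ
      = ∫⁻ x, (∫⁻ t, W t * (f x t / W t) ∂ν) ^ p ∂μ := by
        refine lintegral_congr fun x => congrArg (· ^ p) (lintegral_congr_ae ?_)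
        filter_upwards [hWtop] with t ht
        exact (ENNReal.mul_div_cancel (hW0 t) ht).symm
    _ ≤ ∫⁻ x, (∫⁻ t, W t ∂ν) ^ (p - 1) * ∫⁻ t, W t * (f x t / W t) ^ p ∂ν ∂μ :=
        lintegral_mono fun x => rpow_lintegral_mul_le hp hW ((hfx x).aemeasurable.div hW)
    _ = (∫⁻ t, W t ∂ν) ^ (p - 1) * ∫⁻ t, ∫⁻ x, W t * (f x t / W t) ^ p ∂μ ∂ν := by
        have hWsnd : AEMeasurable (fun z : α × β => W z.2) (μ.prod ν) := hW.comp_snd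
        have hprod : AEMeasurable
            (Function.uncurry fun x t => W t * (f x t / W t) ^ p) (μ.prod ν) :=
          hWsnd.mul ((hf.aemeasurable.div hWsnd).pow_const p)
        have hinner : AEMeasurable (fun x => ∫⁻ t, W t * (f x t / W t) ^ p ∂ν) μ :=
          hprod.lintegral_prod_right'
        rw [lintegral_const_mul'' _ hinner, lintegral_lintegral_swap hprod]
    _ ≤ (∫⁻ t, W t ∂ν) ^ (p - 1) * ∫⁻ t, W t ∂ν := by
        gcongr 1
        exact lintegral_mono_ae normalized
    _ = (∫⁻ t, W t ∂ν) ^ p := by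
        conv_lhs => enter [2]; rw [← ENNReal.rpow_one (∫⁻ t, W t ∂ν)]
        rw [← ENNReal.rpow_add_of_nonneg _ _ (sub_nonneg.2 hp) zero_le_one, sub_add_cancel]

theorem lintegral_rpow_lintegral_le [SigmaFinite ν] {p : ℝ} (hp : 1 ≤ p) {f : α → β → ℝ≥0∞}
    (hf : Measurable (Function.uncurry f)) :
    (∫⁻ x, (∫⁻ t, f x t ∂ν) ^ p ∂μ) ^ (1 / p) ≤ ∫⁻ t, (∫⁻ x, f x t ^ p ∂μ) ^ (1 / p) ∂ν := by
  have hp0 : 0 < p := by positivity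
  set N : β → ℝ≥0∞ := fun t => (∫⁻ x, f x t ^ p ∂μ) ^ (1 / p)
  have hN : Measurable N := ((hf.pow_const p).lintegral_prod_left').pow_const (1 / p)
  rcases eq_or_ne (∫⁻ t, N t ∂ν) ⊤ with hNtop | hNtop
  · exact hNtop ▸ le_top
  refine ENNReal.le_of_forall_pos_le_add fun δ hδ _ => ?_
  -- Perturbing `N` by a positive `g` of small integral makes it a nowhere vanishing weight.
  obtain ⟨g, hg0, hg, hgδ⟩ :=
    exists_pos_lintegral_lt_of_sigmaFinite ν (ENNReal.coe_ne_zero.2 hδ.ne')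
  have key : ∫⁻ x, (∫⁻ t, f x t ∂ν) ^ p ∂μ ≤ (∫⁻ t, (N t + g t) ∂ν) ^ p := by
    refine lintegral_rpow_lintegral_le_of_lintegral_rpow_le hp hf
      (hN.add hg.coe_nnreal_ennreal).aemeasurable (fun t => by simp [(hg0 t).ne']) ?_ fun t => ?_
    · filter_upwards [ae_lt_top hN hNtop] with t ht
      exact ENNReal.add_ne_top.2 ⟨ht.ne, ENNReal.coe_ne_top⟩
    · calc ∫⁻ x, f x t ^ p ∂μ = N t ^ p := by
            rw [← ENNReal.rpow_mul, one_div_mul_cancel hp0.ne', ENNReal.rpow_one]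
        _ ≤ (N t + g t) ^ p := by gcongr; exact le_self_add
  calc (∫⁻ x, (∫⁻ t, f x t ∂ν) ^ p ∂μ) ^ (1 / p) ≤ ∫⁻ t, (N t + g t) ∂ν := by
        rwa [one_div, ENNReal.rpow_inv_le_iff hp0]
    _ ≤ (∫⁻ t, N t ∂ν) + δ := by
        rw [lintegral_add_left hN]
        gcongr

end Minkowski

lemma tendsto_lintegral_mul_min_zero {ι β : Type*} [MeasurableSpace β] {ν : Measure β}
    {l : Filter ι} [l.IsCountablyGenerated] {w : β → ℝ≥0∞} (hw : AEMeasurable w ν)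
    (hwfin : ∫⁻ t, w t ∂ν ≠ ⊤) {C : ℝ≥0∞} (hC : C ≠ ⊤) {h : ι → β → ℝ≥0∞}
    (hh : ∀ i, AEMeasurable (h i) ν) (hlim : ∀ᵐ t ∂ν, Tendsto (h · t) l (𝓝 0)) :
    Tendsto (fun i => ∫⁻ t, w t * min C (h i t) ∂ν) l (𝓝 0) := by
  rw [← lintegral_zero (μ := ν)]
  refine tendsto_lintegral_filter_of_dominated_convergence' (fun t => w t * C)
    (Eventually.of_forall fun i => hw.mul (aemeasurable_const.min (hh i)))
    (Eventually.of_forall fun i => Eventually.of_forall fun t => by gcongr; exact min_le_left _ _)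
    (by rw [lintegral_mul_const' _ _ hC]; exact ENNReal.mul_ne_top hwfin hC) ?_
  filter_upwards [hlim, ae_lt_top' hw hwfin] with t ht hwt
  simpa using ENNReal.Tendsto.const_mul (tendsto_const_nhds.min ht) (Or.inr hwt.ne)

section HardyNorm

/-- The measure `|x|^a dx` on `ℝ`: the weighted Hardy norm is the supremum of the `L^p` norms of
the horizontal slices with respect to it. -/
noncomputable def powerMeasure (a : ℝ) : Measure ℝ :=
  volume.withDensity fun x => ENNReal.ofReal (|x| ^ a)

instance (a : ℝ) : SFinite (powerMeasure a) := by
  unfold powerMeasure; infer_instance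

lemma lintegral_powerMeasure (a : ℝ) (g : ℝ → ℝ≥0∞) :
    ∫⁻ x, g x ∂powerMeasure a = ∫⁻ x, g x * ENNReal.ofReal (|x| ^ a) := by
  rw [powerMeasure, lintegral_withDensity_eq_lintegral_mul_non_measurable _ (by fun_prop)
    (Eventually.of_forall fun x => ENNReal.ofReal_lt_top)]
  simp only [Pi.mul_apply, mul_comm]

lemma map_div_powerMeasure (a : ℝ) {t : ℝ} (ht : 0 < t) :
    (powerMeasure a).map (· / t) = ENNReal.ofReal (t ^ (a + 1)) • powerMeasure a := by
  refine Measure.ext_of_lintegral _ fun g hg => ?_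
  have hg' : Measurable fun x : ℝ => g (x / t) * ENNReal.ofReal (|x| ^ a) := by fun_prop
  have density (x : ℝ) : ENNReal.ofReal |t| * ENNReal.ofReal (|t * x| ^ a) =
      ENNReal.ofReal (t ^ (a + 1)) * ENNReal.ofReal (|x| ^ a) := by
    rw [← ENNReal.ofReal_mul (abs_nonneg t), ← ENNReal.ofReal_mul (by positivity), abs_mul,
      Real.mul_rpow (abs_nonneg t) (abs_nonneg x), abs_of_pos ht, Real.rpow_add_one ht.ne']
    ring_nf
  calc ∫⁻ x, g x ∂(powerMeasure a).map (· / t)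
      = ∫⁻ x, g (x / t) * ENNReal.ofReal (|x| ^ a) := by
        rw [lintegral_map hg (by fun_prop), lintegral_powerMeasure]
    _ = ENNReal.ofReal |t| * ∫⁻ x, g x * ENNReal.ofReal (|t * x| ^ a) := by
        conv_lhs => rw [← Real.smul_map_volume_mul_left ht.ne', lintegral_smul_measure,
          lintegral_map hg' (by fun_prop)]
        simp only [mul_div_cancel_left₀ _ ht.ne', smul_eq_mul]
    _ = ∫⁻ x, g x ∂(ENNReal.ofReal (t ^ (a + 1)) • powerMeasure a) := by
        rw [lintegral_smul_measure, lintegral_powerMeasure, smul_eq_mul,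
          ← lintegral_const_mul' _ _ ENNReal.ofReal_ne_top,
          ← lintegral_const_mul' _ _ ENNReal.ofReal_ne_top]
        simp only [mul_left_comm _ (g _), density]

lemma hardyNorm_eq_iSup_eLpNorm {p : ℝ} (hp : 0 < p) (a : ℝ) (f : ℂ → ℂ) :
    hardyNorm p a f = ⨆ y ∈ Set.Ioi (0 : ℝ),
      eLpNorm (fun x : ℝ => f (x + y * Complex.I)) (ENNReal.ofReal p) (powerMeasure a) := by
  simp only [hardyNorm, eLpNorm_eq_lintegral_rpow_enorm_toReal (ENNReal.ofReal_pos.2 hp).ne'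
    ENNReal.ofReal_ne_top, ENNReal.toReal_ofReal hp.le, lintegral_powerMeasure, enorm_eq_nnnorm]

variable {p a : ℝ} {f g : ℂ → ℂ}

lemma eLpNorm_le_hardyNorm (hp : 0 < p) (a : ℝ) (f : ℂ → ℂ) {y : ℝ} (hy : 0 < y) :
    eLpNorm (fun x : ℝ => f (x + y * Complex.I)) (ENNReal.ofReal p) (powerMeasure a) ≤
      hardyNorm p a f := by
  rw [hardyNorm_eq_iSup_eLpNorm hp]
  exact le_iSup₂ (f := fun y (_ : y ∈ Set.Ioi (0 : ℝ)) => eLpNorm (fun x : ℝ =>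
    f (x + y * Complex.I)) (ENNReal.ofReal p) (powerMeasure a)) y hy

lemma hardyNorm_le (hp : 0 < p) {B : ℝ≥0∞}
    (h : ∀ y : ℝ, 0 < y → eLpNorm (fun x : ℝ => f (x + y * Complex.I)) (ENNReal.ofReal p)
      (powerMeasure a) ≤ B) :
    hardyNorm p a f ≤ B := by
  rw [hardyNorm_eq_iSup_eLpNorm hp]
  exact iSup₂_le h

lemma hardyNorm_congr (h : ∀ z : ℂ, 0 < z.im → f z = g z) : hardyNorm p a f = hardyNorm p a g :=
  biSup_congr fun y (hy : 0 < y) => by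
    have hslice : ∀ x : ℝ, f (x + y * Complex.I) = g (x + y * Complex.I) :=
      fun x => h _ (by simpa using hy)
    simp only [hslice]

lemma hardyNorm_le_mul_of_norm_le (hp : 0 < p) {C : ℝ}
    (h : ∀ z : ℂ, 0 < z.im → ‖f z‖ ≤ C * ‖g z‖) :
    hardyNorm p a f ≤ ENNReal.ofReal C * hardyNorm p a g :=
  hardyNorm_le hp fun y hy => (eLpNorm_le_mul_eLpNorm_of_ae_le_mul
    (Eventually.of_forall fun x => h _ (by simpa using hy)) _).trans
      (by gcongr; exact eLpNorm_le_hardyNorm hp a g hy)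

lemma hardyNorm_const_mul_le (hp : 0 < p) (a : ℝ) (f : ℂ → ℂ) (c : ℂ) :
    hardyNorm p a (fun z => c * f z) ≤ ‖c‖ₑ * hardyNorm p a f :=
  hardyNorm_le hp fun y hy =>
    (eLpNorm_const_smul c (fun x : ℝ => f (x + y * Complex.I)) _ _).trans_le
      (by gcongr; exact eLpNorm_le_hardyNorm hp a f hy)

lemma hardyNorm_add_le (hp : 1 ≤ p) (hf : Measurable f) (hg : Measurable g) :
    hardyNorm p a (fun z => f z + g z) ≤ hardyNorm p a f + hardyNorm p a g := by
  have hp0 : 0 < p := by positivity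
  refine hardyNorm_le hp0 fun y hy => ?_
  have hslice : Measurable fun x : ℝ => (x : ℂ) + y * Complex.I := by fun_prop
  exact (eLpNorm_add_le (hf.comp hslice).aestronglyMeasurable
    (hg.comp hslice).aestronglyMeasurable (ENNReal.one_le_ofReal.2 hp)).trans
      (add_le_add (eLpNorm_le_hardyNorm hp0 a f hy) (eLpNorm_le_hardyNorm hp0 a g hy))

lemma hardyNorm_comp_div_le (hp : 0 < p) (hf : Measurable f) {t : ℝ} (ht : 0 < t) :
    hardyNorm p a (fun z => f (z / t)) ≤ ENNReal.ofReal (t ^ ((a + 1) / p)) * hardyNorm p a f := by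
  refine hardyNorm_le hp fun y hy => ?_
  have hslice : Measurable fun x : ℝ => f (x + (y / t : ℝ) * Complex.I) := by fun_prop
  have hscale : (fun x : ℝ => f ((x + y * Complex.I) / t)) =
      (fun x : ℝ => f (x + (y / t : ℝ) * Complex.I)) ∘ (· / t) := by
    ext x
    simp only [Function.comp_apply, Complex.ofReal_div]
    congr 1
    ring
  rw [hscale, ← eLpNorm_map_measure hslice.aestronglyMeasurable (by fun_prop),
    map_div_powerMeasure a ht, eLpNorm_smul_measure_of_ne_top ENNReal.ofReal_ne_top,
    one_div, ENNReal.toReal_inv, ENNReal.toReal_ofReal hp.le,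
    ENNReal.ofReal_rpow_of_nonneg (by positivity) (by positivity), ← Real.rpow_mul ht.le,
    ← div_eq_mul_inv, smul_eq_mul]
  gcongr
  exact eLpNorm_le_hardyNorm hp a f (div_pos hy ht)

lemma hardyNorm_integral_le (hp : 1 ≤ p) {β : Type*} [MeasurableSpace β] {ν : Measure β}
    [SigmaFinite ν] {F : ℂ → β → ℂ} (hF : Measurable (Function.uncurry F)) :
    hardyNorm p a (fun z => ∫ t, F z t ∂ν) ≤ ∫⁻ t, hardyNorm p a (F · t) ∂ν := by
  have hp0 : 0 < p := by positivity
  have slice : ∀ g : ℝ → ℂ, eLpNorm g (ENNReal.ofReal p) (powerMeasure a) =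
      (∫⁻ x, ‖g x‖ₑ ^ p ∂powerMeasure a) ^ (1 / p) := fun g => by
    rw [eLpNorm_eq_lintegral_rpow_enorm_toReal (ENNReal.ofReal_pos.2 hp0).ne'
      ENNReal.ofReal_ne_top, ENNReal.toReal_ofReal hp0.le]
  refine hardyNorm_le hp0 fun y hy => ?_
  have hFy : Measurable (Function.uncurry fun (x : ℝ) t => ‖F (x + y * Complex.I) t‖ₑ) :=
    (hF.comp (f := fun q : ℝ × β => ((q.1 : ℂ) + y * Complex.I, q.2)) (by fun_prop)).enorm
  calc eLpNorm (fun x : ℝ => ∫ t, F (x + y * Complex.I) t ∂ν) _ (powerMeasure a)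
      ≤ (∫⁻ x : ℝ, (∫⁻ t, ‖F (x + y * Complex.I) t‖ₑ ∂ν) ^ p ∂powerMeasure a) ^ (1 / p) := by
        rw [slice]
        gcongr
        exact enorm_integral_le_lintegral_enorm _
    _ ≤ ∫⁻ t, (∫⁻ x : ℝ, ‖F (x + y * Complex.I) t‖ₑ ^ p ∂powerMeasure a) ^ (1 / p) ∂ν :=
        lintegral_rpow_lintegral_le hp hFy
    _ ≤ ∫⁻ t, hardyNorm p a (F · t) ∂ν :=
        lintegral_mono fun t => (slice _).symm.trans_le (eLpNorm_le_hardyNorm hp0 a (F · t) hy)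

lemma hardyNorm_le_liminf (hp : 0 < p) {u : ℕ → ℂ → ℂ} (hu : ∀ n, Measurable (u n))
    (hlim : ∀ z : ℂ, 0 < z.im → Tendsto (u · z) atTop (𝓝 (f z))) :
    hardyNorm p a f ≤ liminf (fun n => hardyNorm p a (u n)) atTop :=
  hardyNorm_le hp fun y hy => by
    refine (Lp.eLpNorm_lim_le_liminf_eLpNorm
      (f := fun n (x : ℝ) => u n (x + y * Complex.I)) (fun n => ?_) _ ?_).trans
      (liminf_le_liminf (Eventually.of_forall fun n => eLpNorm_le_hardyNorm hp a (u n) hy))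
    · exact ((hu n).comp (by fun_prop)).aestronglyMeasurable
    · exact Eventually.of_forall fun x => hlim _ (by simpa using hy)

end HardyNorm

section ComplexPower

open Complex

variable {w z s : ℂ} {t u : ℝ}

lemma norm_cpow_le_rpow_mul_exp (hw : w ≠ 0) (s : ℂ) :
    ‖w ^ s‖ ≤ ‖w‖ ^ s.re * Real.exp (Real.pi * |s.im|) := by
  have harg : -(arg w * s.im) ≤ Real.pi * |s.im| := calc
    -(arg w * s.im) ≤ |arg w| * |s.im| := by rw [← abs_mul]; exact neg_le_abs _
    _ ≤ Real.pi * |s.im| := by gcongr; exact abs_arg_le_pi w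
  rw [norm_cpow_of_ne_zero hw, div_eq_mul_inv, ← Real.exp_neg]
  gcongr

lemma rpow_mul_exp_le_norm_cpow (hw : w ≠ 0) (s : ℂ) :
    ‖w‖ ^ s.re * Real.exp (-(Real.pi * |s.im|)) ≤ ‖w ^ s‖ := by
  have harg : arg w * s.im ≤ Real.pi * |s.im| := calc
    arg w * s.im ≤ |arg w| * |s.im| := by rw [← abs_mul]; exact le_abs_self _
    _ ≤ Real.pi * |s.im| := by gcongr; exact abs_arg_le_pi w
  rw [norm_cpow_of_ne_zero hw, div_eq_mul_inv, ← Real.exp_neg]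
  gcongr

lemma ofReal_mul_cpow (ht : 0 < t) (hw : w ≠ 0) (s : ℂ) :
    ((t : ℂ) * w) ^ s = (t : ℂ) ^ s * w ^ s := by
  have ht0 : (t : ℂ) ≠ 0 := ofReal_ne_zero.2 ht.ne'
  rw [cpow_def_of_ne_zero (mul_ne_zero ht0 hw), cpow_def_of_ne_zero ht0, cpow_def_of_ne_zero hw,
    log_ofReal_mul ht hw, ← exp_add, add_mul, ofReal_log ht.le]

lemma norm_le_norm_of_abs_re_le_of_abs_im_le (hre : |z.re| ≤ |w.re|) (him : |z.im| ≤ |w.im|) :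
    ‖z‖ ≤ ‖w‖ := by
  rw [norm_eq_sqrt_sq_add_sq, norm_eq_sqrt_sq_add_sq]
  exact Real.sqrt_le_sqrt (add_le_add (sq_le_sq.2 hre) (sq_le_sq.2 him))

lemma mul_norm_add_I_le_norm_add_mul_I (hz : 0 ≤ z.im) (ht : 0 ≤ t) (ht1 : t ≤ 1) (htu : t ≤ u) :
    t * ‖z + I‖ ≤ ‖z + u * I‖ := by
  rw [← Real.norm_of_nonneg ht, ← norm_real, ← norm_mul]
  apply norm_le_norm_of_abs_re_le_of_abs_im_le
  · rw [re_ofReal_mul, abs_mul, abs_of_nonneg ht]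
    simpa using mul_le_of_le_one_left (abs_nonneg z.re) ht1
  · rw [im_ofReal_mul, abs_mul, abs_of_nonneg ht]
    simp only [add_im, I_im, im_ofReal_mul, mul_one, abs_of_nonneg (add_nonneg hz (ht.trans htu)),
      abs_of_nonneg (add_nonneg hz zero_le_one), mul_add]
    exact add_le_add (mul_le_of_le_one_left hz ht1) htu

lemma add_mul_I_mem_slitPlane (hz : 0 ≤ z.im) (ht : 0 < t) : z + t * I ∈ slitPlane :=
  mem_slitPlane_iff.2 <| Or.inr <| by simpa using (add_pos_of_nonneg_of_pos hz ht).ne'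

lemma add_I_ne_zero (hz : 0 ≤ z.im) : z + I ≠ 0 := by
  simpa using slitPlane_ne_zero (add_mul_I_mem_slitPlane hz one_pos)

lemma div_add_I_cpow (hz : 0 ≤ z.im) (ht : 0 < t) (s : ℂ) :
    (z / t + I) ^ s = (t : ℂ) ^ (-s) * (z + t * I) ^ s := by
  have ht0 : (t : ℂ) ≠ 0 := ofReal_ne_zero.2 ht.ne'
  have hw : z + t * I = t * (z / t + I) := by field_simp
  have hne : z / t + I ≠ 0 := fun h =>
    slitPlane_ne_zero (add_mul_I_mem_slitPlane hz ht) (by rw [hw, h, mul_zero])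
  rw [hw, ofReal_mul_cpow ht hne, ← mul_assoc, ← cpow_add _ _ ht0, neg_add_cancel, cpow_zero,
    one_mul]

lemma hasDerivAt_add_mul_I_cpow (hz : 0 ≤ z.im) (ht : 0 < t) (s : ℂ) :
    HasDerivAt (fun u : ℝ => (z + u * I) ^ s) (s * (z + t * I) ^ (s - 1) * I) t := by
  have hline : HasDerivAt (fun w : ℂ => z + w * I) I (t : ℂ) := by
    simpa using ((hasDerivAt_id (t : ℂ)).mul_const I).const_add z
  exact (hline.cpow_const (add_mul_I_mem_slitPlane hz ht)).comp_ofReal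

lemma norm_add_mul_I_cpow_sub_le (hz : 0 ≤ z.im) (ht : 0 < t) (hs : s.re ≤ 1) :
    ‖(z + t * I) ^ s - (z + I) ^ s‖ ≤
      ‖s‖ * ((min t 1 * ‖z + I‖) ^ (s.re - 1) * Real.exp (Real.pi * |s.im|)) * |t - 1| := by
  have hm : 0 < min t 1 := lt_min ht one_pos
  have hzI : 0 < ‖z + I‖ := norm_pos_iff.2 (add_I_ne_zero hz)
  have bound : ∀ u ∈ Set.Ici (min t 1), ‖s * (z + u * I) ^ (s - 1) * I‖ ≤
      ‖s‖ * ((min t 1 * ‖z + I‖) ^ (s.re - 1) * Real.exp (Real.pi * |s.im|)) := fun u hu => by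
    have hne := slitPlane_ne_zero (add_mul_I_mem_slitPlane hz (hm.trans_le hu))
    calc ‖s * (z + u * I) ^ (s - 1) * I‖
        ≤ ‖s‖ * (‖z + u * I‖ ^ (s.re - 1) * Real.exp (Real.pi * |s.im|)) := by
          rw [norm_mul, norm_mul, norm_I, mul_one]
          gcongr
          simpa using norm_cpow_le_rpow_mul_exp hne (s - 1)
      _ ≤ ‖s‖ * ((min t 1 * ‖z + I‖) ^ (s.re - 1) * Real.exp (Real.pi * |s.im|)) := by
          gcongr ‖s‖ * (?_ * _)
          exact Real.rpow_le_rpow_of_nonpos (by positivity)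
            (mul_norm_add_I_le_norm_add_mul_I hz hm.le (min_le_right t 1) hu) (sub_nonpos.2 hs)
  simpa using (convex_Ici (min t 1)).norm_image_sub_le_of_norm_hasDerivWithin_le
    (fun u hu => (hasDerivAt_add_mul_I_cpow hz (hm.trans_le hu) s).hasDerivWithinAt) bound
    (Set.mem_Ici.2 (min_le_right t 1)) (Set.mem_Ici.2 (min_le_left t 1))

end ComplexPower

section PowersOfAddI

open Complex (I)

variable {p a : ℝ} {s : ℂ}

lemma memLp_powerMeasure_iff {E : Type*} [NormedAddCommGroup E] (hp : 0 < p) (a : ℝ) {f : ℝ → E}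
    (hf : StronglyMeasurable f) :
    MemLp f (ENNReal.ofReal p) (powerMeasure a) ↔ Integrable fun x => ‖f x‖ ^ p * |x| ^ a := by
  rw [← integrable_norm_rpow_iff hf.aestronglyMeasurable (ENNReal.ofReal_pos.2 hp).ne'
    ENNReal.ofReal_ne_top, ENNReal.toReal_ofReal hp.le, powerMeasure,
    integrable_withDensity_iff (by fun_prop) (Eventually.of_forall fun x => ENNReal.ofReal_lt_top)]
  simp only [ENNReal.toReal_ofReal (Real.rpow_nonneg (abs_nonneg _) a)]

lemma integrable_abs_rpow_mul_rpow {b : ℝ} (ha : -1 < a) (hb : b < -(a + 1)) :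
    Integrable fun x : ℝ => √(x ^ 2 + 1) ^ b * |x| ^ a := by
  have hb0 : b ≤ 0 := by linarith
  have base_pos : ∀ x : ℝ, 0 < √(x ^ 2 + 1) := fun x => by positivity
  have hcont : Continuous fun x : ℝ => √(x ^ 2 + 1) ^ b :=
    (by fun_prop : Continuous fun x : ℝ => √(x ^ 2 + 1)).rpow_const fun x =>
      Or.inl (base_pos x).ne'
  have mellin : IntegrableOn (fun x : ℝ => x ^ (a + 1 - 1) * √(x ^ 2 + 1) ^ b) (Set.Ioi 0) := by
    refine mellin_convergent_of_isBigO_scalar (a := -b) (b := 0)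
      (hcont.locallyIntegrable.locallyIntegrableOn _) ?_ (by linarith) ?_ (by linarith)
    · refine .of_bound 1 ((eventually_gt_atTop 0).mono fun x hx => ?_)
      rw [one_mul, neg_neg, Real.norm_of_nonneg (by positivity),
        Real.norm_of_nonneg (by positivity)]
      exact Real.rpow_le_rpow_of_nonpos hx (Real.le_sqrt_of_sq_le (by linarith)) hb0
    · refine .of_bound 1 (Eventually.of_forall fun x => ?_)
      rw [one_mul, neg_zero, Real.rpow_zero, norm_one, Real.norm_of_nonneg (by positivity)]
      exact Real.rpow_le_one_of_one_le_of_nonpos (Real.one_le_sqrt.2 (by nlinarith)) hb0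
  have radial := integrable_fun_norm_addHaar (μ := (volume : Measure ℝ))
    (f := fun x : ℝ => √(x ^ 2 + 1) ^ b * x ^ a)
  simp only [Module.finrank_self, Nat.sub_self, pow_zero, one_smul, Real.norm_eq_abs,
    sq_abs] at radial
  exact radial.2 (by simpa only [add_sub_cancel_right, mul_comm] using mellin)

lemma hardyNorm_add_I_cpow_lt_top (hp : 0 < p) (ha : -1 < a) (hs : s.re < -((a + 1) / p)) :
    hardyNorm p a (fun z => (z + I) ^ s) < ⊤ := by
  have hsp : s.re * p < -(a + 1) := by rwa [← neg_div, lt_div_iff₀ hp] at hs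
  have hs0 : s.re ≤ 0 := hs.le.trans (neg_nonpos.2 (div_nonneg (by linarith) hp.le))
  have hmem : MemLp (fun x : ℝ => ‖(x : ℂ) + I‖ ^ s.re) (ENNReal.ofReal p) (powerMeasure a) := by
    rw [memLp_powerMeasure_iff hp a (by fun_prop)]
    convert integrable_abs_rpow_mul_rpow ha hsp using 3 with x
    rw [Real.norm_of_nonneg (by positivity), ← Real.rpow_mul (norm_nonneg _)]
    simp [Complex.norm_eq_sqrt_sq_add_sq]
  refine (hardyNorm_le hp fun y hy => ?_).trans_lt
    (hmem.mul_const (Real.exp (Real.pi * |s.im|))).eLpNorm_lt_top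
  refine eLpNorm_mono_real fun x => ?_
  have him : 0 ≤ ((x : ℂ) + y * I).im := by simpa using hy.le
  calc ‖((x : ℂ) + y * I + I) ^ s‖
      ≤ ‖(x : ℂ) + y * I + I‖ ^ s.re * Real.exp (Real.pi * |s.im|) :=
        norm_cpow_le_rpow_mul_exp (add_I_ne_zero him) s
    _ ≤ ‖(x : ℂ) + I‖ ^ s.re * Real.exp (Real.pi * |s.im|) := by
        gcongr ?_ * _
        refine Real.rpow_le_rpow_of_nonpos (norm_pos_iff.2 (add_I_ne_zero (by simp)))
          (norm_le_norm_of_abs_re_le_of_abs_im_le (by simp) ?_) hs0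
        simpa using abs_le_abs_of_nonneg zero_le_one (by linarith : 1 ≤ y + 1)

lemma mul_inv_le_norm_add_two_mul_I_cpow_rpow_mul (hp : 0 < p) (ha : -1 ≤ a)
    (hs : s.re = -((a + 1) / p)) {x : ℝ} (hx : 1 < x) :
    3 ^ (-(a + 1)) * Real.exp (-(Real.pi * |s.im|)) ^ p * x⁻¹ ≤
      ‖((x : ℂ) + I + I) ^ s‖ ^ p * |x| ^ a := by
  have hx0 : 0 < x := one_pos.trans hx
  have hsp : s.re * p = -(a + 1) := by rw [hs]; field_simp
  have hs0 : s.re ≤ 0 := hs ▸ neg_nonpos.2 (div_nonneg (by linarith) hp.le)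
  have hne : (x : ℂ) + I + I ≠ 0 := add_I_ne_zero (by simp)
  have hnorm : ‖(x : ℂ) + I + I‖ ≤ 3 * x := by
    calc ‖(x : ℂ) + I + I‖ ≤ ‖(x : ℂ)‖ + ‖I‖ + ‖I‖ := norm_add₃_le
      _ ≤ 3 * x := by
        rw [Complex.norm_I, Complex.norm_real, Real.norm_of_nonneg hx0.le]; linarith
  calc 3 ^ (-(a + 1)) * Real.exp (-(Real.pi * |s.im|)) ^ p * x⁻¹
      = ((3 * x) ^ s.re * Real.exp (-(Real.pi * |s.im|))) ^ p * |x| ^ a := by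
        rw [abs_of_pos hx0, Real.mul_rpow (by positivity) (by positivity),
          ← Real.rpow_mul (by positivity), hsp, Real.mul_rpow (by positivity) hx0.le,
          neg_add', Real.rpow_sub_one hx0.ne', Real.rpow_neg hx0.le]
        field_simp
    _ ≤ ‖((x : ℂ) + I + I) ^ s‖ ^ p * |x| ^ a := by
        gcongr
        refine le_trans ?_ (rpow_mul_exp_le_norm_cpow hne s)
        gcongr ?_ * _
        exact Real.rpow_le_rpow_of_nonpos (norm_pos_iff.2 hne) hnorm hs0

lemma hardyNorm_add_I_cpow_eq_top (hp : 0 < p) (ha : -1 ≤ a) (hs : s.re = -((a + 1) / p)) :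
    hardyNorm p a (fun z => (z + I) ^ s) = ⊤ := by
  by_contra hfin
  have hg : Measurable fun x : ℝ => ((x : ℂ) + I + I) ^ s := by fun_prop
  have hmem : MemLp (fun x : ℝ => ((x : ℂ) + I + I) ^ s) (ENNReal.ofReal p) (powerMeasure a) := by
    refine ⟨hg.aestronglyMeasurable, lt_of_le_of_lt ?_ (lt_top_iff_ne_top.2 hfin)⟩
    simpa using eLpNorm_le_hardyNorm hp a (fun z => (z + I) ^ s) one_pos
  rw [memLp_powerMeasure_iff hp a hg.stronglyMeasurable] at hmem
  set K : ℝ := 3 ^ (-(a + 1)) * Real.exp (-(Real.pi * |s.im|)) ^ p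
  have hK : 0 < K := by positivity
  have hinv : IntegrableOn (fun x : ℝ => K * x⁻¹) (Set.Ioi 1) := by
    refine hmem.integrableOn.mono' (by fun_prop) ?_
    filter_upwards [ae_restrict_mem measurableSet_Ioi] with x hx
    rw [Real.norm_of_nonneg (mul_nonneg hK.le (inv_nonneg.2 (one_pos.trans hx).le))]
    exact mul_inv_le_norm_add_two_mul_I_cpow_rpow_mul hp ha hs hx
  exact not_integrableOn_Ioi_inv ((integrable_const_mul_iff hK.ne'.isUnit _).1 hinv)

end PowersOfAddI

section TestFunctions

variable {c ε ξ t : ℝ} {z : ℂ}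

@[fun_prop]
lemma measurable_testFun (c ε ξ : ℝ) : Measurable (testFun c ε ξ) := by
  unfold testFun
  fun_prop

lemma one_le_norm_add_I (hz : 0 ≤ z.im) : 1 ≤ ‖z + Complex.I‖ := by
  have : z.im + 1 ≤ ‖z + Complex.I‖ := by simpa using Complex.im_le_norm (z + Complex.I)
  linarith

lemma norm_testFun_le (hz : 0 ≤ z.im) (c ε ξ : ℝ) :
    ‖testFun c ε ξ z‖ ≤ ‖z + Complex.I‖ ^ (-c - ε) * Real.exp (Real.pi * |ξ|) := by
  simpa [testFun] using
    norm_cpow_le_rpow_mul_exp (add_I_ne_zero hz) (((-c - ε : ℝ) : ℂ) + Complex.I * ξ)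

lemma norm_testFun_div_le (hc : 0 ≤ c) (hε : 0 ≤ ε) (hz : 0 < z.im) (ht : 0 < t) :
    ‖testFun c ε ξ (z / t)‖ ≤ z.im ^ (-c) * Real.exp (Real.pi * |ξ|) * t ^ c := by
  have him : (z / t).im = z.im / t := Complex.div_ofReal_im z t
  have hzt : 0 < z.im / t := div_pos hz ht
  have hle : z.im / t ≤ ‖z / t + Complex.I‖ := by
    have := Complex.im_le_norm (z / t + Complex.I)
    rw [Complex.add_im, Complex.I_im, him] at this
    linarith
  calc ‖testFun c ε ξ (z / t)‖
      ≤ ‖z / t + Complex.I‖ ^ (-c - ε) * Real.exp (Real.pi * |ξ|) :=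
        norm_testFun_le (him ▸ hzt.le) c ε ξ
    _ ≤ ‖z / t + Complex.I‖ ^ (-c) * Real.exp (Real.pi * |ξ|) := by
        gcongr
        · exact one_le_norm_add_I (him ▸ hzt.le)
        · linarith
    _ ≤ (z.im / t) ^ (-c) * Real.exp (Real.pi * |ξ|) := by
        gcongr ?_ * _
        exact Real.rpow_le_rpow_of_nonpos hzt hle (neg_nonpos.2 hc)
    _ = z.im ^ (-c) * Real.exp (Real.pi * |ξ|) * t ^ c := by
        rw [Real.div_rpow hz.le ht.le, Real.rpow_neg ht.le, div_inv_eq_mul]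
        ring

variable {p a : ℝ}

lemma hardyNorm_testFun_lt_top (hp : 0 < p) (ha : -1 < a) (hε : 0 < ε) (ξ : ℝ) :
    hardyNorm p a (testFun ((a + 1) / p) ε ξ) < ⊤ :=
  hardyNorm_add_I_cpow_lt_top hp ha (by simpa using hε)

lemma tendsto_hardyNorm_testFun (hp : 0 < p) (ha : -1 ≤ a) (ξ : ℝ) :
    Tendsto (fun ε => hardyNorm p a (testFun ((a + 1) / p) ε ξ)) (𝓝 0) (𝓝 ⊤) := by
  refine tendsto_of_seq_tendsto fun u hu => tendsto_of_le_liminf_of_limsup_le ?_ le_top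
  have htop : hardyNorm p a (testFun ((a + 1) / p) 0 ξ) = ⊤ :=
    hardyNorm_add_I_cpow_eq_top hp ha (by simp)
  rw [← htop]
  refine hardyNorm_le_liminf hp (fun n => measurable_testFun _ (u n) ξ) fun z hz => ?_
  have hcont : Continuous fun ε => testFun ((a + 1) / p) ε ξ z := by
    unfold testFun
    exact Continuous.const_cpow (by fun_prop) (Or.inl (add_I_ne_zero hz.le))
  exact (hcont.tendsto 0).comp hu

end TestFunctions

section DilationDefect

variable {p a c ε ξ t : ℝ} {s z : ℂ}

/-- The failure `f(z/t) - t^s f(z)` of `f` to be homogeneous of degree `-s`. The homogeneous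
functions are the formal eigenfunctions of `HphiHol φ`; `khat φ c ξ` is the eigenvalue belonging to
`s = c - iξ`. -/
noncomputable def dilationDefect (s : ℂ) (f : ℂ → ℂ) (t : ℝ) (z : ℂ) : ℂ :=
  f (z / t) - (t : ℂ) ^ s * f z

lemma hardyNorm_dilationDefect_le (hp : 1 ≤ p) {f : ℂ → ℂ} (hf : Measurable f)
    (hs : s.re = (a + 1) / p) (ht : 0 < t) :
    hardyNorm p a (dilationDefect s f t) ≤
      ENNReal.ofReal (t ^ ((a + 1) / p)) * (2 * hardyNorm p a f) := by
  have hp0 : 0 < p := by positivity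
  have hts : ‖-(t : ℂ) ^ s‖ₑ = ENNReal.ofReal (t ^ ((a + 1) / p)) := by
    rw [enorm_neg, ← ofReal_norm, Complex.norm_cpow_eq_rpow_re_of_pos ht, hs]
  calc hardyNorm p a (dilationDefect s f t)
      = hardyNorm p a (fun z => f (z / t) + -(t : ℂ) ^ s * f z) := by
        simp only [neg_mul, ← sub_eq_add_neg]; rfl
    _ ≤ hardyNorm p a (fun z => f (z / t)) + hardyNorm p a (fun z => -(t : ℂ) ^ s * f z) :=
        hardyNorm_add_le hp (by fun_prop) (by fun_prop)
    _ ≤ ENNReal.ofReal (t ^ ((a + 1) / p)) * hardyNorm p a f +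
          ENNReal.ofReal (t ^ ((a + 1) / p)) * hardyNorm p a f := by
        rw [← hts]
        gcongr
        · exact hts ▸ hardyNorm_comp_div_le hp0 hf ht
        · exact hardyNorm_const_mul_le hp0 a f _
    _ = ENNReal.ofReal (t ^ ((a + 1) / p)) * (2 * hardyNorm p a f) := by ring

lemma dilationDefect_testFun (hz : 0 ≤ z.im) (ht : 0 < t) (c ε ξ : ℝ) :
    dilationDefect (c - Complex.I * ξ) (testFun c ε ξ) t z =
      ((1 - t ^ (-ε) : ℝ) : ℂ) * testFun c ε ξ (z / t) + (t : ℂ) ^ (c - Complex.I * ξ : ℂ) *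
        ((z + t * Complex.I) ^ (((-c - ε : ℝ) : ℂ) + Complex.I * ξ) - testFun c ε ξ z) := by
  have hpow : ((t ^ (-ε) : ℝ) : ℂ) * testFun c ε ξ (z / t) = (t : ℂ) ^ (c - Complex.I * ξ : ℂ) *
      (z + t * Complex.I) ^ (((-c - ε : ℝ) : ℂ) + Complex.I * ξ) := by
    rw [testFun, div_add_I_cpow hz ht, ← mul_assoc, Complex.ofReal_cpow ht.le,
      ← Complex.cpow_add _ _ (Complex.ofReal_ne_zero.2 ht.ne')]
    push_cast
    ring_nf
  rw [dilationDefect, mul_sub, ← hpow]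
  push_cast
  ring

/-- A constant, uniform in `ε ∈ (0, 1)`, for comparing `(z + it)^(-c-ε+iξ) - (z + i)^(-c-ε+iξ)`
with `(z + i)^(-c-1)`. -/
noncomputable def translationConst (c ξ t : ℝ) : ℝ :=
  (c + 1 + |ξ|) * (min t 1 ^ (-(c + 2)) * Real.exp (Real.pi * |ξ|)) * |t - 1|

lemma norm_add_mul_I_cpow_sub_testFun_le (hc : 0 ≤ c) (hε : ε ∈ Set.Ioo 0 1) (hz : 0 ≤ z.im)
    (ht : 0 < t) :
    ‖(z + t * Complex.I) ^ (((-c - ε : ℝ) : ℂ) + Complex.I * ξ) - testFun c ε ξ z‖ ≤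
      translationConst c ξ t * ‖testFun c 1 0 z‖ := by
  obtain ⟨hε0, hε1⟩ := hε
  have hm : 0 < min t 1 := lt_min ht one_pos
  have hzI : 1 ≤ ‖z + Complex.I‖ := one_le_norm_add_I hz
  set s : ℂ := ((-c - ε : ℝ) : ℂ) + Complex.I * ξ
  have hre : s.re = -c - ε := by simp [s]
  have him : s.im = ξ := by simp [s]
  have hs : ‖s‖ ≤ c + 1 + |ξ| := by
    refine (Complex.norm_le_abs_re_add_abs_im s).trans ?_
    rw [hre, him, abs_of_nonpos (by linarith)]
    linarith
  have htest : ‖testFun c 1 0 z‖ = ‖z + Complex.I‖ ^ (-c - 1) := by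
    simp only [testFun, Complex.ofReal_zero, mul_zero, add_zero, Complex.norm_cpow_real]
  have hpow : (min t 1 * ‖z + Complex.I‖) ^ (s.re - 1) ≤
      min t 1 ^ (-(c + 2)) * ‖z + Complex.I‖ ^ (-c - 1) := by
    rw [Real.mul_rpow hm.le (norm_nonneg _), hre]
    gcongr ?_ * ?_
    · exact Real.rpow_le_rpow_of_exponent_ge hm (min_le_right t 1) (by linarith)
    · exact Real.rpow_le_rpow_of_exponent_le hzI (by linarith)
  calc ‖(z + t * Complex.I) ^ s - testFun c ε ξ z‖
      ≤ ‖s‖ * ((min t 1 * ‖z + Complex.I‖) ^ (s.re - 1) * Real.exp (Real.pi * |s.im|)) *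
          |t - 1| := norm_add_mul_I_cpow_sub_le hz ht (by linarith)
    _ ≤ (c + 1 + |ξ|) * (min t 1 ^ (-(c + 2)) * ‖z + Complex.I‖ ^ (-c - 1) *
          Real.exp (Real.pi * |ξ|)) * |t - 1| := by
        rw [him]
        gcongr
    _ = translationConst c ξ t * ‖testFun c 1 0 z‖ := by
        rw [translationConst, htest]
        ring

lemma hardyNorm_dilationDefect_testFun_le (hp : 1 ≤ p) (ha : -1 ≤ a) (hc : c = (a + 1) / p)
    (hε : ε ∈ Set.Ioo 0 1) (ht : 0 < t) :
    hardyNorm p a (dilationDefect (c - Complex.I * ξ) (testFun c ε ξ) t) ≤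
      ENNReal.ofReal (t ^ c) * (‖1 - t ^ (-ε)‖ₑ * hardyNorm p a (testFun c ε ξ) +
        ENNReal.ofReal (translationConst c ξ t) * hardyNorm p a (testFun c 1 0)) := by
  have hp0 : 0 < p := by positivity
  have hc0 : 0 ≤ c := hc ▸ div_nonneg (by linarith) hp0.le
  have hts : ‖(t : ℂ) ^ (c - Complex.I * ξ : ℂ)‖ₑ = ENNReal.ofReal (t ^ c) := by
    rw [← ofReal_norm, Complex.norm_cpow_eq_rpow_re_of_pos ht]
    simp
  set g : ℂ → ℂ := fun z =>
    (z + t * Complex.I) ^ (((-c - ε : ℝ) : ℂ) + Complex.I * ξ) - testFun c ε ξ z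
  have hg : Measurable g := by fun_prop
  have hgnorm : hardyNorm p a g ≤
      ENNReal.ofReal (translationConst c ξ t) * hardyNorm p a (testFun c 1 0) :=
    hardyNorm_le_mul_of_norm_le hp0 fun z hz =>
      norm_add_mul_I_cpow_sub_testFun_le hc0 hε hz.le ht
  calc hardyNorm p a (dilationDefect (c - Complex.I * ξ) (testFun c ε ξ) t)
      = hardyNorm p a (fun z => ((1 - t ^ (-ε) : ℝ) : ℂ) * testFun c ε ξ (z / t) +
          (t : ℂ) ^ (c - Complex.I * ξ : ℂ) * g z) :=
        hardyNorm_congr fun z hz => dilationDefect_testFun hz.le ht c ε ξ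
    _ ≤ ‖((1 - t ^ (-ε) : ℝ) : ℂ)‖ₑ * hardyNorm p a (fun z => testFun c ε ξ (z / t)) +
          ‖(t : ℂ) ^ (c - Complex.I * ξ : ℂ)‖ₑ * hardyNorm p a g :=
        (hardyNorm_add_le hp (by fun_prop) (by fun_prop)).trans
          (add_le_add (hardyNorm_const_mul_le hp0 _ _ _) (hardyNorm_const_mul_le hp0 _ _ _))
    _ ≤ ‖1 - t ^ (-ε)‖ₑ * (ENNReal.ofReal (t ^ c) * hardyNorm p a (testFun c ε ξ)) +
          ENNReal.ofReal (t ^ c) *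
            (ENNReal.ofReal (translationConst c ξ t) * hardyNorm p a (testFun c 1 0)) := by
        rw [hts, ← ofReal_norm, ← ofReal_norm, Complex.norm_real]
        gcongr
        subst hc
        exact hardyNorm_comp_div_le hp0 (measurable_testFun _ ε ξ) ht
    _ = ENNReal.ofReal (t ^ c) * (‖1 - t ^ (-ε)‖ₑ * hardyNorm p a (testFun c ε ξ) +
          ENNReal.ofReal (translationConst c ξ t) * hardyNorm p a (testFun c 1 0)) := by ring

lemma hardyNorm_dilationDefect_testFun_le_min_mul (hp : 1 ≤ p) (ha : -1 < a)
    (hc : c = (a + 1) / p) (hε : ε ∈ Set.Ioo 0 1) (hF : hardyNorm p a (testFun c ε ξ) ≠ 0)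
    (ht : 0 < t) :
    hardyNorm p a (dilationDefect (c - Complex.I * ξ) (testFun c ε ξ) t) ≤
      ENNReal.ofReal (t ^ c) * min 2 (‖1 - t ^ (-ε)‖ₑ + ENNReal.ofReal (translationConst c ξ t) *
        hardyNorm p a (testFun c 1 0) / hardyNorm p a (testFun c ε ξ)) *
          hardyNorm p a (testFun c ε ξ) := by
  have hFtop : hardyNorm p a (testFun c ε ξ) ≠ ⊤ :=
    hc ▸ (hardyNorm_testFun_lt_top (by positivity) ha hε.1 ξ).ne
  rw [mul_assoc, min_mul_of_nonneg _ _ zero_le, add_mul, ENNReal.div_mul_cancel hF hFtop,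
    mul_min_of_nonneg _ _ zero_le]
  refine le_min ?_ (hardyNorm_dilationDefect_testFun_le hp ha.le hc hε ht)
  subst hc
  exact hardyNorm_dilationDefect_le hp (measurable_testFun _ ε ξ) (by simp) ht

lemma tendsto_dilationDefect_testFun_bound (hp : 0 < p) (ha : -1 < a) (hc : c = (a + 1) / p)
    (ξ : ℝ) (ht : 0 < t) :
    Tendsto (fun ε => ‖1 - t ^ (-ε)‖ₑ + ENNReal.ofReal (translationConst c ξ t) *
      hardyNorm p a (testFun c 1 0) / hardyNorm p a (testFun c ε ξ)) (𝓝 0) (𝓝 0) := by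
  subst hc
  have hpow : Tendsto (fun ε : ℝ => ‖1 - t ^ (-ε)‖ₑ) (𝓝 0) (𝓝 0) := by
    have hcont : Continuous fun ε : ℝ => ‖1 - t ^ (-ε)‖ₑ :=
      (continuous_const.sub (Real.continuous_const_rpow ht.ne' |>.comp continuous_neg)).enorm
    simpa using hcont.tendsto 0
  have hquot : Tendsto (fun ε => ENNReal.ofReal (translationConst ((a + 1) / p) ξ t) *
      hardyNorm p a (testFun ((a + 1) / p) 1 0) /
        hardyNorm p a (testFun ((a + 1) / p) ε ξ)) (𝓝 0) (𝓝 0) := by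
    have hfin : ENNReal.ofReal (translationConst ((a + 1) / p) ξ t) *
        hardyNorm p a (testFun ((a + 1) / p) 1 0) ≠ ⊤ :=
      ENNReal.mul_ne_top ENNReal.ofReal_ne_top (hardyNorm_testFun_lt_top hp ha one_pos 0).ne
    simpa using ENNReal.Tendsto.const_div (tendsto_hardyNorm_testFun hp ha.le ξ) (Or.inr hfin)
  simpa using hpow.add hquot

end DilationDefect

section HausdorffOperator

variable {p a c ε ξ : ℝ} {φ : ℝ → ℂ} {f : ℂ → ℂ} {z : ℂ}

lemma HphiHol_sub_khat_mul (hφm : Measurable φ)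
    (hφ : IntegrableOn (fun t => ‖φ t‖ * t ^ (c - 1)) (Set.Ioi 0)) (ξ : ℝ) (hf : Measurable f)
    {C : ℝ} (hfC : ∀ t : ℝ, 0 < t → ‖f (z / t)‖ ≤ C * t ^ c) :
    HphiHol φ f z - khat φ c ξ * f z =
      ∫ t in Set.Ioi (0 : ℝ), φ t / t * dilationDefect (c - Complex.I * ξ) f t z := by
  have hH : IntegrableOn (fun t : ℝ => f (z / t) * φ t / t) (Set.Ioi 0) := by
    have hmeas : Measurable fun t : ℝ => f (z / t) * φ t / t := by fun_prop
    refine (hφ.const_mul C).mono' hmeas.aestronglyMeasurable ?_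
    filter_upwards [ae_restrict_mem measurableSet_Ioi] with t ht
    have ht0 : 0 < t := ht
    rw [norm_div, norm_mul, Complex.norm_real, Real.norm_of_nonneg ht0.le]
    calc ‖f (z / t)‖ * ‖φ t‖ / t ≤ C * t ^ c * ‖φ t‖ / t := by gcongr; exact hfC t ht0
      _ = C * (‖φ t‖ * t ^ (c - 1)) := by rw [Real.rpow_sub_one ht0.ne']; ring
  have hk : IntegrableOn (fun t : ℝ => φ t * (t : ℂ) ^ (c - 1 - Complex.I * ξ : ℂ))
      (Set.Ioi 0) := by
    refine hφ.mono' (by fun_prop) ?_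
    filter_upwards [ae_restrict_mem measurableSet_Ioi] with t ht
    rw [norm_mul, Complex.norm_cpow_eq_rpow_re_of_pos ht]
    simp
  rw [HphiHol, khat, ← integral_mul_const, ← integral_sub hH (hk.mul_const (f z))]
  refine setIntegral_congr_fun measurableSet_Ioi fun t ht => ?_
  have ht0 : (t : ℂ) ≠ 0 := Complex.ofReal_ne_zero.2 (ne_of_gt ht)
  simp only [dilationDefect, sub_right_comm (c : ℂ) 1, Complex.cpow_sub _ 1 ht0, Complex.cpow_one]
  ring

lemma hardyNorm_HphiHol_sub_khat_mul_le (hp : 1 ≤ p) (hφm : Measurable φ)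
    (hφ : IntegrableOn (fun t => ‖φ t‖ * t ^ (c - 1)) (Set.Ioi 0)) (ξ : ℝ) (hf : Measurable f)
    (hfC : ∀ z : ℂ, 0 < z.im → ∃ C : ℝ, ∀ t : ℝ, 0 < t → ‖f (z / t)‖ ≤ C * t ^ c) :
    hardyNorm p a (fun z => HphiHol φ f z - khat φ c ξ * f z) ≤
      ∫⁻ t in Set.Ioi (0 : ℝ),
        ‖φ t / t‖ₑ * hardyNorm p a (dilationDefect (c - Complex.I * ξ) f t) := by
  have hmeas : Measurable (Function.uncurry fun (z : ℂ) (t : ℝ) =>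
      φ t / t * dilationDefect (c - Complex.I * ξ) f t z) := by
    unfold dilationDefect Function.uncurry
    fun_prop
  calc hardyNorm p a (fun z => HphiHol φ f z - khat φ c ξ * f z)
      = hardyNorm p a (fun z => ∫ t in Set.Ioi (0 : ℝ),
          φ t / t * dilationDefect (c - Complex.I * ξ) f t z) :=
        hardyNorm_congr fun z hz =>
          let ⟨_, hC⟩ := hfC z hz
          HphiHol_sub_khat_mul hφm hφ ξ hf hC
    _ ≤ ∫⁻ t in Set.Ioi (0 : ℝ), hardyNorm p a fun z =>
          φ t / t * dilationDefect (c - Complex.I * ξ) f t z := hardyNorm_integral_le hp hmeas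
    _ ≤ _ := lintegral_mono fun t =>
        hardyNorm_const_mul_le (by positivity) a (dilationDefect (c - Complex.I * ξ) f t) _

lemma hardyNorm_HphiHol_testFun_sub_div_le (hp : 1 ≤ p) (ha : -1 < a) (hc : c = (a + 1) / p)
    (hφm : Measurable φ) (hφ : IntegrableOn (fun t => ‖φ t‖ * t ^ (c - 1)) (Set.Ioi 0))
    (hε : ε ∈ Set.Ioo 0 1) (hF : hardyNorm p a (testFun c ε ξ) ≠ 0) :
    hardyNorm p a (fun z => HphiHol φ (testFun c ε ξ) z - khat φ c ξ * testFun c ε ξ z) /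
        hardyNorm p a (testFun c ε ξ) ≤
      ∫⁻ t in Set.Ioi (0 : ℝ), ENNReal.ofReal (‖φ t‖ * t ^ (c - 1)) *
        min 2 (‖1 - t ^ (-ε)‖ₑ + ENNReal.ofReal (translationConst c ξ t) *
          hardyNorm p a (testFun c 1 0) / hardyNorm p a (testFun c ε ξ)) := by
  have hc0 : 0 ≤ c := hc ▸ div_nonneg (by linarith) (by positivity)
  have hFtop : hardyNorm p a (testFun c ε ξ) ≠ ⊤ :=
    hc ▸ (hardyNorm_testFun_lt_top (by positivity) ha hε.1 ξ).ne
  have weight : ∀ t : ℝ, 0 < t → ‖φ t / t‖ₑ * ENNReal.ofReal (t ^ c) =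
      ENNReal.ofReal (‖φ t‖ * t ^ (c - 1)) := fun t ht => by
    rw [← ofReal_norm, ← ENNReal.ofReal_mul (norm_nonneg _), norm_div, Complex.norm_real,
      Real.norm_of_nonneg ht.le, Real.rpow_sub_one ht.ne']
    ring_nf
  refine ENNReal.div_le_of_le_mul ((hardyNorm_HphiHol_sub_khat_mul_le hp hφm hφ ξ
    (measurable_testFun c ε ξ) fun z hz =>
      ⟨_, fun t ht => norm_testFun_div_le hc0 hε.1.le hz ht⟩).trans ?_)
  rw [← lintegral_mul_const' _ _ hFtop]
  refine setLIntegral_mono' measurableSet_Ioi fun t ht => ?_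
  rw [← weight t ht, mul_assoc ‖φ t / t‖ₑ, mul_assoc ‖φ t / t‖ₑ]
  gcongr
  exact hardyNorm_dilationDefect_testFun_le_min_mul hp ha hc hε hF ht

end HausdorffOperator

/-- Each `f_{ε,ξ}` has finite weighted Hardy norm and, for fixed `ξ`,
`‖ℋ_φ f_{ε,ξ} − k̂_{a,p}(ξ) f_{ε,ξ}‖ / ‖f_{ε,ξ}‖ → 0` as `ε → 0⁺` in `(0,1)`. -/
theorem stmt10 (p a : ℝ) (hp : 1 ≤ p) (ha : -1 < a) (φ : ℝ → ℂ) (hφm : Measurable φ)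
    (hφ : IntegrableOn (fun t => ‖φ t‖ * t ^ ((a + 1) / p - 1)) (Set.Ioi (0 : ℝ)))
    (ξ : ℝ) :
    (∀ ε ∈ Set.Ioo (0 : ℝ) 1, hardyNorm p a (testFun ((a + 1) / p) ε ξ) < ⊤) ∧
    Tendsto (fun ε : ℝ =>
        hardyNorm p a (fun z => HphiHol φ (testFun ((a + 1) / p) ε ξ) z -
            khat φ ((a + 1) / p) ξ * testFun ((a + 1) / p) ε ξ z) /
          hardyNorm p a (testFun ((a + 1) / p) ε ξ))
      (𝓝[Set.Ioo (0 : ℝ) 1] 0) (𝓝 (0 : ℝ≥0∞)) := by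
  have hp0 : 0 < p := by positivity
  refine ⟨fun ε hε => hardyNorm_testFun_lt_top hp0 ha hε.1 ξ, ?_⟩
  have bound_tendsto := tendsto_lintegral_mul_min_zero (l := 𝓝[Set.Ioo (0 : ℝ) 1] 0)
    (ν := volume.restrict (Set.Ioi 0)) hφ.aestronglyMeasurable.aemeasurable.ennreal_ofReal
    hφ.lintegral_lt_top.ne ENNReal.ofNat_ne_top
    (h := fun ε t => ‖1 - t ^ (-ε)‖ₑ + ENNReal.ofReal (translationConst ((a + 1) / p) ξ t) *
      hardyNorm p a (testFun ((a + 1) / p) 1 0) / hardyNorm p a (testFun ((a + 1) / p) ε ξ))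
    (C := 2)
    (fun ε => by unfold translationConst; fun_prop)
    ((ae_restrict_mem measurableSet_Ioi).mono fun t ht =>
      (tendsto_dilationDefect_testFun_bound hp0 ha rfl ξ ht).mono_left nhdsWithin_le_nhds)
  refine tendsto_of_tendsto_of_tendsto_of_le_of_le' tendsto_const_nhds bound_tendsto
    (Eventually.of_forall fun ε => zero_le) ?_
  filter_upwards [self_mem_nhdsWithin, nhdsWithin_le_nhds
    ((tendsto_hardyNorm_testFun hp0 ha.le ξ).eventually_ne ENNReal.top_ne_zero)] with ε hε hF
  exact hardyNorm_HphiHol_testFun_sub_div_le hp ha rfl hφm hφ hε hF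
end

section
/- Let 1 ≤ p < ∞, a > −1, and let φ : (0,∞) → ℂ be measurable with ∫₀^∞ |φ(t)| t^{(a+1)/p − 1} dt < ∞. If C ≥ 0 is a constant such that ‖ℋ_φ f‖_{H^p_{|·|^a}} ≤ C ‖f‖_{H^p_{|·|^a}} for every holomorphic f on 𝕌 with ‖f‖_{H^p_{|·|^a}} < ∞, then sup_{ξ ∈ ℝ} |k̂_{a,p}(ξ)| ≤ C. -/
open MeasureTheory
open scoped ENNReal NNReal

/-!
On an eigenfunction `z^{-s}`, `s = (a + 1) / p - iξ`, the operator `ℋ_φ` is multiplication by the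
Mellin transform `mellin φ s = k̂_{a,p}(ξ)`, but `z^{-s}` is not in the Hardy space. It is
approximated by the holomorphic powers `f_ε(z) = (1 - iz)^{-(s + ε)}`, whose norms blow up as
`ε → 0⁺` because of the part of the line near infinity. In the coordinate `r = ε log |x|` this part
has a fixed scale: after multiplication by `|x|^s`, which absorbs the weight and the Jacobian, `f_ε`
converges to the profile `1_{r > 0} e^{-r} (∓i)^{-s}` and `ℋ_φ f_ε` converges to `mellin φ s` times
the same profile. Dominated convergence for `f_ε` and Fatou's lemma for `ℋ_φ f_ε` turn the norm
inequality into `|mellin φ s| ≤ C`. The weighted integral of `f_ε` does not increase under upward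
translation, so its Hardy norm is controlled by its values on the real line.
-/

open Filter Topology

/-- The weighted integral `∫ |f(x + iy)|^p |x|^a dx`, so that `hardyNorm p a f ^ p` is its supremum
over `y > 0`. -/
noncomputable def hardyLineIntegral (p a : ℝ) (f : ℂ → ℂ) (y : ℝ) : ℝ≥0∞ :=
  ∫⁻ x : ℝ, ‖f (x + y * Complex.I)‖ₑ ^ p * ENNReal.ofReal (|x| ^ a)

/-- The holomorphic power `(1 - iz)^{-s}`, for `z` in the upper half-plane. -/
noncomputable def hardyPower (s z : ℂ) : ℂ := (1 - Complex.I * z) ^ (-s)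

/-- The function `|x|^s f(x + iy)` in the logarithmic coordinate `r`, where `x = σ e^{r / ε}` and
`σ = ±1` selects a half-line. -/
noncomputable def logRescale (s : ℂ) (ε σ y : ℝ) (f : ℂ → ℂ) (r : ℝ) : ℂ :=
  Complex.exp (s * (r / ε : ℝ)) * f ((σ * Real.exp (r / ε) : ℝ) + y * Complex.I)

/-- The limit as `ε → 0⁺` of `logRescale s ε σ 0 (hardyPower (s + ε))`. -/
noncomputable def logProfile (s : ℂ) (σ : ℝ) : ℝ → ℂ :=
  (Set.Ioi 0).indicator fun r => Real.exp (-r) * (-(σ * Complex.I)) ^ (-s)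

section HardyNorm

variable {p a : ℝ} {f : ℂ → ℂ}

lemma hardyLineIntegral_le_hardyNorm_rpow (hp : 0 < p) {y : ℝ} (hy : 0 < y) :
    hardyLineIntegral p a f y ≤ hardyNorm p a f ^ p := by
  rw [← ENNReal.rpow_inv_le_iff hp, ← one_div]
  exact le_iSup₂_of_le y hy le_rfl

lemma hardyNorm_rpow_le (hp : 0 < p) {B : ℝ≥0∞} (h : ∀ y > 0, hardyLineIntegral p a f y ≤ B) :
    hardyNorm p a f ^ p ≤ B := by
  rw [← ENNReal.le_rpow_inv_iff hp, ← one_div]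
  exact iSup₂_le fun y hy => ENNReal.rpow_le_rpow (h y hy) (by positivity)

end HardyNorm

section Integrals

lemma integrable_exp_neg_mul_abs {b : ℝ} (hb : 0 < b) :
    Integrable fun x : ℝ => Real.exp (-b * |x|) := by
  rw [← integrableOn_univ, ← Set.Iic_union_Ioi (a := 0)]
  refine IntegrableOn.union ?_ ?_
  · refine (integrableOn_exp_mul_Iic hb 0).congr_fun (fun x hx => ?_) measurableSet_Iic
    simp only [abs_of_nonpos (Set.mem_Iic.1 hx), neg_mul_neg]
  · refine (integrableOn_exp_mul_Ioi (neg_neg_of_pos hb) 0).congr_fun (fun x hx => ?_)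
      measurableSet_Ioi
    simp only [abs_of_pos (Set.mem_Ioi.1 hx)]

lemma lintegral_eq_ofReal_abs_mul_lintegral_comp_mul_left {b : ℝ} (hb : b ≠ 0) (G : ℝ → ℝ≥0∞) :
    ∫⁻ x, G x = ENNReal.ofReal |b| * ∫⁻ x, G (b * x) := by
  conv_lhs => rw [← Real.smul_map_volume_mul_left hb]
  rw [lintegral_smul_measure, smul_eq_mul]
  exact congrArg _ ((Homeomorph.mulLeft₀ b hb).measurableEmbedding.lintegral_map G)

lemma range_mul_exp_div {ε : ℝ} (hε : 0 < ε) (σ : ℝ) :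
    Set.range (fun r : ℝ => σ * Real.exp (r / ε)) = (σ * ·) '' Set.Ioi 0 := by
  have hsurj : Function.Surjective fun r : ℝ => r / ε := fun x => ⟨x * ε, by field_simp⟩
  rw [← Real.range_exp, ← Set.range_comp]
  exact hsurj.range_comp fun x => σ * Real.exp x

lemma lintegral_image_mul_Ioi {ε σ : ℝ} (hε : 0 < ε) (hσ : σ ≠ 0) (G : ℝ → ℝ≥0∞) :
    ∫⁻ x in (σ * ·) '' Set.Ioi 0, G x =
      ∫⁻ r, ENNReal.ofReal (|σ| * Real.exp (r / ε) / ε) * G (σ * Real.exp (r / ε)) := by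
  have hderiv (r : ℝ) : HasDerivAt (fun r => σ * Real.exp (r / ε))
      (σ * (Real.exp (r / ε) * (1 / ε))) r :=
    (((hasDerivAt_id r).div_const ε).exp.const_mul σ)
  have hinj : Function.Injective fun r : ℝ => σ * Real.exp (r / ε) := fun r₁ r₂ h =>
    (div_left_inj' hε.ne').1 (Real.exp_injective (mul_left_cancel₀ hσ h))
  rw [← range_mul_exp_div hε, ← Set.image_univ, lintegral_image_eq_lintegral_abs_deriv_mul
    MeasurableSet.univ (fun r _ => (hderiv r).hasDerivWithinAt) hinj.injOn, setLIntegral_univ]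
  simp only [abs_mul, abs_div, Real.abs_exp, abs_of_pos hε, mul_one_div, mul_div_assoc]

lemma lintegral_eq_sum_lintegral_exp_div {ε : ℝ} (hε : 0 < ε) (G : ℝ → ℝ≥0∞) :
    ∫⁻ x, G x = ∑ σ ∈ {1, -1},
      ∫⁻ r, ENNReal.ofReal (Real.exp (r / ε) / ε) * G (σ * Real.exp (r / ε)) := by
  have hpos := lintegral_image_mul_Ioi hε one_ne_zero G
  have hneg := lintegral_image_mul_Ioi hε (neg_ne_zero.2 one_ne_zero) G
  simp only [one_mul, Set.image_id', abs_one, abs_neg, neg_mul, Set.image_neg_eq_neg, Set.neg_Ioi,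
    neg_zero] at hpos hneg
  rw [← lintegral_add_compl G measurableSet_Ioi, Set.compl_Ioi,
    ← setLIntegral_congr Iio_ae_eq_Iic, hpos, hneg, Finset.sum_pair (by norm_num)]
  simp only [one_mul, neg_mul]

end Integrals

section LogRescale

variable {p a : ℝ} {s : ℂ} {ε σ y : ℝ} {φ : ℝ → ℂ} {f : ℂ → ℂ}

lemma norm_logRescale (r : ℝ) :
    ‖logRescale s ε σ y f r‖ = Real.exp (s.re * (r / ε)) *
      ‖f ((σ * Real.exp (r / ε) : ℝ) + y * Complex.I)‖ := by
  rw [logRescale, norm_mul, Complex.norm_exp, Complex.re_mul_ofReal]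

lemma ofReal_mul_hardyLineIntegral (hp : 0 < p) (hs : s.re * p = a + 1) (hε : 0 < ε) :
    ENNReal.ofReal ε * hardyLineIntegral p a f y =
      ∑ σ ∈ {1, -1}, ∫⁻ r, ‖logRescale s ε σ y f r‖ₑ ^ p := by
  have habs : ∀ σ ∈ ({1, -1} : Finset ℝ), |σ| = 1 := by simp
  rw [hardyLineIntegral, lintegral_eq_sum_lintegral_exp_div hε, Finset.mul_sum]
  refine Finset.sum_congr rfl fun σ hσ => ?_
  rw [← lintegral_const_mul' _ _ ENNReal.ofReal_ne_top]
  refine lintegral_congr fun r => ?_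
  have hweight : ε * (Real.exp (r / ε) / ε) * Real.exp (r / ε) ^ a =
      Real.exp (s.re * (r / ε)) ^ p := by
    rw [mul_div_cancel₀ _ hε.ne', ← Real.exp_mul, ← Real.exp_mul, ← Real.exp_add]
    congr 1
    linear_combination -(r / ε) * hs
  rw [← ofReal_norm (logRescale s ε σ y f r), norm_logRescale,
    ENNReal.ofReal_mul (Real.exp_pos _).le, ENNReal.mul_rpow_of_nonneg _ _ hp.le, ofReal_norm,
    ENNReal.ofReal_rpow_of_nonneg (Real.exp_pos _).le hp.le, ← hweight,
    ENNReal.ofReal_mul (by positivity), ENNReal.ofReal_mul hε.le, abs_mul, habs σ hσ,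
    one_mul, Real.abs_exp]
  ring

lemma logRescale_HphiHol (r : ℝ) :
    logRescale s ε σ y (HphiHol φ f) r = ∫ t in Set.Ioi (0 : ℝ),
      (t : ℂ) ^ (-s) * logRescale s ε σ y (fun z => f (z / t)) r * ((t : ℂ) ^ (s - 1) • φ t) := by
  rw [logRescale, HphiHol, ← integral_const_mul]
  refine setIntegral_congr_fun measurableSet_Ioi fun t ht => ?_
  have ht : (t : ℂ) ≠ 0 := Complex.ofReal_ne_zero.2 (ne_of_gt ht)
  have hpow : (t : ℂ) ^ (-s) * (t : ℂ) ^ (s - 1) = (t : ℂ)⁻¹ := by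
    rw [← Complex.cpow_add _ _ ht, ← Complex.cpow_neg_one]
    ring_nf
  simp only [logRescale, smul_eq_mul, div_eq_mul_inv, ← hpow]
  ring

lemma aestronglyMeasurable_logRescale_HphiHol (hφ : MellinConvergent φ s) (hf : Measurable f) :
    AEStronglyMeasurable (logRescale s ε σ y (HphiHol φ f)) := by
  have hker : Measurable fun q : ℝ × ℝ =>
      (q.2 : ℂ) ^ (-s) * logRescale s ε σ y (fun z => f (z / q.2)) q.1 := by
    unfold logRescale
    fun_prop
  have hint := (hker.aestronglyMeasurable
    (μ := volume.prod (volume.restrict (Set.Ioi 0)))).mul hφ.aestronglyMeasurable.comp_snd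
  exact (hint.integral_prod_right' (μ := volume)).congr
    (.of_forall fun r => (logRescale_HphiHol r).symm)

end LogRescale

section HardyPower

variable {p a : ℝ} {s z : ℂ}

lemma one_le_re_one_sub_I_mul (hz : 0 ≤ z.im) : 1 ≤ (1 - Complex.I * z).re := by
  simpa using hz

lemma one_le_norm_one_sub_I_mul (hz : 0 ≤ z.im) : 1 ≤ ‖1 - Complex.I * z‖ :=
  (one_le_re_one_sub_I_mul hz).trans (Complex.re_le_norm _)

lemma differentiableOn_hardyPower : DifferentiableOn ℂ (hardyPower s) upperHalf := by
  refine DifferentiableOn.cpow (by fun_prop) (by fun_prop) fun z hz => .inl ?_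
  exact one_pos.trans_le (one_le_re_one_sub_I_mul (le_of_lt hz))

@[fun_prop]
lemma measurable_hardyPower : Measurable (hardyPower s) := by
  unfold hardyPower
  fun_prop

lemma norm_hardyPower_le {u : ℝ} (hz : 0 ≤ z.im) (hre : z.re ≠ 0) (hu : 0 ≤ u) (hus : u ≤ s.re) :
    ‖hardyPower s z‖ ≤ Real.exp (Real.pi * |s.im|) * |z.re| ^ (-u) := by
  set w := 1 - Complex.I * z with hw
  have hw_one : 1 ≤ ‖w‖ := one_le_norm_one_sub_I_mul hz
  have hw_re : |z.re| ≤ ‖w‖ := by simpa [hw] using Complex.abs_im_le_norm w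
  have hw_arg : w.arg * s.im ≤ Real.pi * |s.im| :=
    (le_abs_self _).trans ((abs_mul _ _).trans_le
      (mul_le_mul_of_nonneg_right (Complex.abs_arg_le_pi w) (abs_nonneg _)))
  calc
    ‖w ^ (-s)‖ ≤ ‖w‖ ^ (-s.re) / Real.exp (w.arg * -s.im) := Complex.norm_cpow_le w (-s)
    _ = Real.exp (w.arg * s.im) * ‖w‖ ^ (-s.re) := by
      rw [mul_neg, Real.exp_neg, div_inv_eq_mul, mul_comm]
    _ ≤ Real.exp (Real.pi * |s.im|) * ‖w‖ ^ (-u) := by gcongr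
    _ ≤ Real.exp (Real.pi * |s.im|) * |z.re| ^ (-u) := by
      gcongr ?_ * ?_
      exact Real.rpow_le_rpow_of_nonpos (abs_pos.2 hre) hw_re (neg_nonpos.2 hu)

lemma ofReal_mul_cpow_s11 {R : ℝ} (hR : 0 < R) (hz : z ≠ 0) : (R * z) ^ s = (R : ℂ) ^ s * z ^ s := by
  have hR' : (R : ℂ) ≠ 0 := Complex.ofReal_ne_zero.2 hR.ne'
  rw [Complex.cpow_def_of_ne_zero (mul_ne_zero hR' hz), Complex.cpow_def_of_ne_zero hR',
    Complex.cpow_def_of_ne_zero hz, Complex.log_ofReal_mul hR hz, Complex.ofReal_log hR.le,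
    add_mul, Complex.exp_add]

lemma hardyPower_one_add_mul_add_mul_I (x : ℝ) {y : ℝ} (hy : 0 ≤ y) :
    hardyPower s (((1 + y) * x : ℝ) + y * Complex.I) =
      ((1 + y : ℝ) : ℂ) ^ (-s) * hardyPower s x := by
  have hx : 1 - Complex.I * (x : ℂ) ≠ 0 :=
    norm_pos_iff.1 (one_pos.trans_le (one_le_norm_one_sub_I_mul (Complex.ofReal_im x).ge))
  rw [hardyPower, hardyPower, ← ofReal_mul_cpow_s11 (by positivity) hx]
  congr 1
  push_cast
  linear_combination -(y : ℂ) * Complex.I_sq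

lemma hardyLineIntegral_hardyPower_le (hp : 0 < p) (hs : a + 1 ≤ s.re * p) {y : ℝ} (hy : 0 ≤ y) :
    hardyLineIntegral p a (hardyPower s) y ≤ hardyLineIntegral p a (hardyPower s) 0 := by
  have hy' : 0 < 1 + y := by positivity
  rw [hardyLineIntegral, lintegral_eq_ofReal_abs_mul_lintegral_comp_mul_left hy'.ne',
    ← lintegral_const_mul' _ _ ENNReal.ofReal_ne_top]
  refine lintegral_mono fun x => ?_
  have hfactor : (1 + y) * ((1 + y) ^ (-s.re)) ^ p * (1 + y) ^ a ≤ 1 := by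
    calc
      _ = (1 + y) ^ (1 + -s.re * p + a) := by
        rw [Real.rpow_add hy', Real.rpow_add hy', Real.rpow_one, Real.rpow_mul hy'.le]
      _ ≤ 1 := Real.rpow_le_one_of_one_le_of_nonpos (by linarith) (by linarith)
  have hnorm : ‖((1 + y : ℝ) : ℂ) ^ (-s)‖ₑ = ENNReal.ofReal ((1 + y) ^ (-s.re)) := by
    rw [← ofReal_norm, Complex.norm_cpow_eq_rpow_re_of_pos hy', Complex.neg_re]
  calc
    _ = ENNReal.ofReal ((1 + y) * ((1 + y) ^ (-s.re)) ^ p * (1 + y) ^ a) *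
        (‖hardyPower s x‖ₑ ^ p * ENNReal.ofReal (|x| ^ a)) := by
      rw [hardyPower_one_add_mul_add_mul_I x hy, enorm_mul, hnorm,
        ENNReal.mul_rpow_of_nonneg _ _ hp.le,
        ENNReal.ofReal_rpow_of_nonneg (by positivity) hp.le, abs_mul,
        Real.mul_rpow (abs_nonneg _) (abs_nonneg _), abs_of_pos hy',
        ENNReal.ofReal_mul (by positivity), ENNReal.ofReal_mul (by positivity),
        ENNReal.ofReal_mul (by positivity)]
      ring
    _ ≤ ‖hardyPower s x‖ₑ ^ p * ENNReal.ofReal (|x| ^ a) :=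
      mul_le_of_le_one_left' (ENNReal.ofReal_le_one.2 hfactor)
    _ = _ := by rw [Complex.ofReal_zero, zero_mul, add_zero]

end HardyPower

section LogRescalePower

variable {s w : ℂ} {ε σ y t r : ℝ}

lemma norm_logRescale_hardyPower_le (ht : 0 < t) (hy : 0 ≤ y) (hσ : |σ| = 1) {u : ℝ}
    (hu : 0 ≤ u) (huw : u ≤ w.re) :
    ‖logRescale s ε σ y (fun z => hardyPower w (z / t)) r‖ ≤
      Real.exp (Real.pi * |w.im|) * Real.exp ((s.re - u) * (r / ε)) * t ^ u := by
  set z : ℂ := (σ * Real.exp (r / ε) : ℝ) + y * Complex.I with hz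
  have hz_im : 0 ≤ (z / t).im := by
    simp only [hz, Complex.div_ofReal_im, Complex.add_im, Complex.ofReal_im, Complex.mul_I_im,
      Complex.ofReal_re, zero_add]
    positivity
  have hz_re : |(z / t).re| = Real.exp (r / ε) / t := by
    simp only [hz, Complex.div_ofReal_re, Complex.add_re, Complex.ofReal_re, Complex.mul_I_re,
      Complex.ofReal_im, neg_zero, add_zero, abs_div, abs_mul, hσ, one_mul, Real.abs_exp,
      abs_of_pos ht]
  have hz_re_ne : (z / t).re ≠ 0 := abs_pos.1 (hz_re ▸ by positivity)
  have hpow : (Real.exp (r / ε) / t) ^ (-u) = Real.exp (-u * (r / ε)) * t ^ u := by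
    rw [Real.div_rpow (Real.exp_pos _).le ht.le, Real.rpow_neg ht.le, div_inv_eq_mul,
      ← Real.exp_mul, mul_comm (r / ε)]
  calc
    _ = Real.exp (s.re * (r / ε)) * ‖hardyPower w (z / t)‖ := norm_logRescale r
    _ ≤ Real.exp (s.re * (r / ε)) *
        (Real.exp (Real.pi * |w.im|) * (Real.exp (-u * (r / ε)) * t ^ u)) := by
      rw [← hpow, ← hz_re]
      gcongr
      exact norm_hardyPower_le hz_im hz_re_ne hu huw
    _ = _ := by
      rw [sub_eq_add_neg, add_mul, Real.exp_add]
      ring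

lemma logRescale_hardyPower_eq (hε : ε ≠ 0) (hσ : σ ≠ 0) (ht : 0 < t) :
    logRescale s ε σ y (fun z => hardyPower (s + ε) (z / t)) r =
      Real.exp (-r) * (t : ℂ) ^ (s + ε) *
        (((t + y) * Real.exp (-(r / ε)) : ℝ) - σ * Complex.I) ^ (-(s + ε)) := by
  set w : ℂ := ((t + y) * Real.exp (-(r / ε)) : ℝ) - σ * Complex.I with hw
  have hw_ne : w ≠ 0 := fun h => hσ (by simpa [hw, -Complex.ofReal_exp] using congrArg Complex.im h)
  have hexp : 0 < Real.exp (r / ε) := Real.exp_pos _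
  have hbase : 1 - Complex.I * (((σ * Real.exp (r / ε) : ℝ) + y * Complex.I) / t) =
      (Real.exp (r / ε) / t : ℝ) * w := by
    have ht' : (t : ℂ) ≠ 0 := Complex.ofReal_ne_zero.2 ht.ne'
    have hexp' : (Real.exp (r / ε) : ℂ) ≠ 0 := Complex.ofReal_ne_zero.2 hexp.ne'
    rw [hw, Real.exp_neg]
    push_cast [-Complex.ofReal_exp]
    field_simp
    linear_combination -(y : ℂ) * Complex.I_sq
  have hexp_pow : ((Real.exp (r / ε) / t : ℝ) : ℂ) ^ (-(s + ε)) =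
      Complex.exp (-(s * (r / ε : ℝ))) * Real.exp (-r) * (t : ℂ) ^ (s + ε) := by
    have hε' : (ε : ℂ) ≠ 0 := Complex.ofReal_ne_zero.2 hε
    rw [Complex.ofReal_div, Complex.div_cpow_ofReal_nonneg hexp.le ht.le, Complex.cpow_neg (t : ℂ),
      div_inv_eq_mul, Complex.cpow_def_of_ne_zero (Complex.ofReal_ne_zero.2 hexp.ne'),
      ← Complex.ofReal_log hexp.le, Real.log_exp, Complex.ofReal_exp, ← Complex.exp_add]
    congr 2
    push_cast
    field_simp
    ring
  rw [logRescale, hardyPower, hbase, ofReal_mul_cpow_s11 (by positivity) hw_ne, hexp_pow,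
    Complex.exp_neg]
  field_simp [Complex.exp_ne_zero]

lemma tendsto_exp_neg_div_nhdsGT_zero (hr : 0 < r) :
    Tendsto (fun ε => Real.exp (-(r / ε))) (𝓝[>] 0) (𝓝 0) :=
  Real.tendsto_exp_neg_atTop_nhds_zero.comp (tendsto_inv_nhdsGT_zero.const_mul_atTop hr)

lemma tendsto_logRescale_hardyPower_comp_div (hσ : σ ≠ 0) (ht : 0 < t) (hr : 0 < r) :
    Tendsto (fun ε : ℝ => logRescale s ε σ y (fun z => hardyPower (s + ε) (z / t)) r) (𝓝[>] 0)
      (𝓝 ((t : ℂ) ^ s * logProfile s σ r)) := by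
  have hs : Tendsto (fun ε : ℝ => s + ε) (𝓝[>] 0) (𝓝 s) := by
    refine Tendsto.mono_left ?_ nhdsWithin_le_nhds
    simpa using (by fun_prop : Continuous fun ε : ℝ => s + ε).tendsto 0
  have hbase : Tendsto (fun ε : ℝ => (((t + y) * Real.exp (-(r / ε)) : ℝ) : ℂ) - σ * Complex.I)
      (𝓝[>] 0) (𝓝 (-(σ * Complex.I))) := by
    simpa using ((tendsto_exp_neg_div_nhdsGT_zero hr).const_mul (t + y)).ofReal.sub_const
      (σ * Complex.I)
  have hslit : -(σ * Complex.I) ∈ Complex.slitPlane := .inr (by simpa using hσ)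
  have ht_slit : (t : ℂ) ∈ Complex.slitPlane := Complex.ofReal_mem_slitPlane.2 ht
  have hlim : (t : ℂ) ^ s * logProfile s σ r =
      Real.exp (-r) * (t : ℂ) ^ s * (-(σ * Complex.I)) ^ (-s) := by
    rw [logProfile, Set.indicator_of_mem (Set.mem_Ioi.2 hr)]
    ring
  rw [hlim]
  refine (((tendsto_const_nhds.cpow hs ht_slit).const_mul _).mul
    (hbase.cpow hs.neg hslit)).congr' ?_
  filter_upwards [self_mem_nhdsWithin] with ε hε
  exact (logRescale_hardyPower_eq (ne_of_gt hε) hσ ht).symm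

end LogRescalePower

section Limits

variable {p : ℝ} {s : ℂ} {ε σ y r : ℝ} {φ : ℝ → ℂ}

lemma norm_logRescale_hardyPower_zero_le {w : ℂ} (hσ : |σ| = 1) {u : ℝ} (hu : 0 ≤ u)
    (huw : u ≤ w.re) :
    ‖logRescale s ε σ 0 (hardyPower w) r‖ ≤
      Real.exp (Real.pi * |w.im|) * Real.exp ((s.re - u) * (r / ε)) := by
  simpa using norm_logRescale_hardyPower_le (s := s) (ε := ε) (r := r) one_pos le_rfl hσ hu huw

lemma norm_logRescale_hardyPower_le_exp_neg_abs (hs : 0 < s.re) (hε : 0 < ε) (hε₁ : ε ≤ 1)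
    (hσ : |σ| = 1) :
    ‖logRescale s ε σ 0 (hardyPower (s + ε)) r‖ ≤
      Real.exp (Real.pi * |s.im|) * Real.exp (-min 1 s.re * |r|) := by
  have him : (s + ε).im = s.im := by simp
  have hre : (s + ε).re = s.re + ε := by simp
  rcases le_total 0 r with hr | hr
  · refine (norm_logRescale_hardyPower_zero_le hσ (u := s.re + ε) (by positivity) hre.ge).trans ?_
    rw [him, abs_of_nonneg hr, sub_add_cancel_left, neg_mul, mul_div_cancel₀ _ hε.ne', neg_mul]
    gcongr
    exact mul_le_of_le_one_left hr (min_le_left _ _)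
  · refine (norm_logRescale_hardyPower_zero_le hσ le_rfl (hre ▸ by positivity)).trans ?_
    rw [him, abs_of_nonpos hr, sub_zero, neg_mul_neg]
    refine mul_le_mul_of_nonneg_left (Real.exp_le_exp.2 ?_) (Real.exp_pos _).le
    calc
      s.re * (r / ε) ≤ s.re * r := by
        gcongr
        exact (div_le_iff₀ hε).2 (by nlinarith)
      _ ≤ min 1 s.re * r := mul_le_mul_of_nonpos_right (min_le_right _ _) hr

lemma tendsto_logRescale_hardyPower (hs : 0 < s.re) (hσ : |σ| = 1) (hr : r ≠ 0) :
    Tendsto (fun ε : ℝ => logRescale s ε σ 0 (hardyPower (s + ε)) r) (𝓝[>] 0)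
      (𝓝 (logProfile s σ r)) := by
  rcases hr.lt_or_gt with hr | hr
  · have hzero := (tendsto_exp_neg_div_nhdsGT_zero
      (neg_pos.2 (mul_neg_of_pos_of_neg hs hr))).const_mul (Real.exp (Real.pi * |s.im|))
    rw [mul_zero] at hzero
    rw [logProfile, Set.indicator_of_notMem (Set.notMem_Ioi.2 hr.le)]
    refine squeeze_zero_norm' ?_ hzero
    filter_upwards [self_mem_nhdsWithin] with ε (hε : 0 < ε)
    have h := norm_logRescale_hardyPower_zero_le (s := s) (ε := ε) (r := r) (w := s + ε) hσ le_rfl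
      (by simpa using by positivity)
    simpa [neg_div, mul_div_assoc] using h
  · have hσ' : σ ≠ 0 := abs_pos.1 (hσ ▸ one_pos)
    simpa using tendsto_logRescale_hardyPower_comp_div (s := s) (y := 0) hσ' one_pos hr

lemma tendsto_lintegral_enorm_logRescale_hardyPower_rpow (hp : 0 < p) (hs : 0 < s.re)
    (hσ : |σ| = 1) :
    Tendsto (fun ε : ℝ => ∫⁻ r, ‖logRescale s ε σ 0 (hardyPower (s + ε)) r‖ₑ ^ p) (𝓝[>] 0)
      (𝓝 (∫⁻ r, ‖logProfile s σ r‖ₑ ^ p)) := by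
  set K := Real.exp (Real.pi * |s.im|)
  set m := min 1 s.re
  have hm : 0 < m := lt_min one_pos hs
  refine tendsto_lintegral_filter_of_dominated_convergence
    (fun r => ENNReal.ofReal (K ^ p * Real.exp (-(m * p) * |r|))) (.of_forall fun ε => ?_) ?_
    ((integrable_exp_neg_mul_abs (mul_pos hm hp)).const_mul _).lintegral_lt_top.ne ?_
  · unfold logRescale
    fun_prop
  · filter_upwards [Ioc_mem_nhdsGT one_pos] with ε hε
    refine .of_forall fun r => ?_
    have hbound : K ^ p * Real.exp (-(m * p) * |r|) = (K * Real.exp (-m * |r|)) ^ p := by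
      rw [Real.mul_rpow (by positivity) (by positivity), ← Real.exp_mul (-m * |r|)]
      ring_nf
    rw [hbound, ← ENNReal.ofReal_rpow_of_nonneg (by positivity) hp.le, ← ofReal_norm]
    gcongr
    exact norm_logRescale_hardyPower_le_exp_neg_abs hs hε.1 hε.2 hσ
  · filter_upwards [Measure.ae_ne volume 0] with r hr
    exact (tendsto_logRescale_hardyPower hs hσ hr).enorm.ennrpow_const p

lemma lintegral_enorm_logProfile_rpow (hp : 0 < p) :
    ∫⁻ r, ‖logProfile s σ r‖ₑ ^ p = ‖(-(σ * Complex.I)) ^ (-s)‖ₑ ^ p * ENNReal.ofReal p⁻¹ := by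
  have hind (r : ℝ) : ‖logProfile s σ r‖ₑ ^ p = (Set.Ioi 0).indicator (fun r =>
      ‖(-(σ * Complex.I)) ^ (-s)‖ₑ ^ p * ENNReal.ofReal (Real.exp (-p * r))) r := by
    by_cases hr : r ∈ Set.Ioi 0
    · rw [logProfile, Set.indicator_of_mem hr, Set.indicator_of_mem hr, enorm_mul, mul_comm,
        ENNReal.mul_rpow_of_nonneg _ _ hp.le, ← ofReal_norm (Real.exp (-r) : ℂ), Complex.norm_real,
        Real.norm_eq_abs, Real.abs_exp, ENNReal.ofReal_rpow_of_nonneg (Real.exp_pos _).le hp.le,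
        ← Real.exp_mul, neg_mul_comm, mul_comm r, neg_mul_comm]
    · rw [logProfile, Set.indicator_of_notMem hr, Set.indicator_of_notMem hr, enorm_zero,
        ENNReal.zero_rpow_of_pos hp]
  have hp' : -p < 0 := neg_neg_of_pos hp
  simp_rw [hind]
  rw [lintegral_indicator measurableSet_Ioi, lintegral_const_mul _ (by fun_prop),
    ← ofReal_integral_eq_lintegral_ofReal (integrableOn_exp_mul_Ioi hp' 0)
      (.of_forall fun _ => (Real.exp_pos _).le), integral_exp_mul_Ioi hp', mul_zero, Real.exp_zero,
    neg_div_neg_eq, one_div]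

lemma norm_cpow_neg_mul_logRescale_hardyPower_le {t : ℝ} (ht : 0 < t) (hs : 0 < s.re)
    (hε : 0 < ε) (hσ : |σ| = 1) (hy : 0 ≤ y) :
    ‖(t : ℂ) ^ (-s) * logRescale s ε σ y (fun z => hardyPower (s + ε) (z / t)) r‖ ≤
      Real.exp (Real.pi * |s.im|) := by
  have h := norm_logRescale_hardyPower_le (s := s) (w := s + ε) (ε := ε) (r := r) ht hy hσ hs.le
    (by simpa using hε.le)
  rw [sub_self, zero_mul, Real.exp_zero, mul_one, Complex.add_im, Complex.ofReal_im, add_zero] at h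
  rw [norm_mul, Complex.norm_cpow_eq_rpow_re_of_pos ht, Complex.neg_re, Real.rpow_neg ht.le]
  exact (inv_mul_le_iff₀ (by positivity)).2 (h.trans_eq (mul_comm _ _))

lemma tendsto_logRescale_HphiHol_hardyPower (hφ : MellinConvergent φ s) (hs : 0 < s.re)
    (hσ : |σ| = 1) (hy : 0 ≤ y) (hr : 0 < r) :
    Tendsto (fun ε : ℝ => logRescale s ε σ y (HphiHol φ (hardyPower (s + ε))) r) (𝓝[>] 0)
      (𝓝 (logProfile s σ r * mellin φ s)) := by
  have hσ' : σ ≠ 0 := abs_pos.1 (hσ ▸ one_pos)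
  simp_rw [logRescale_HphiHol]
  rw [mellin, ← integral_const_mul]
  refine tendsto_integral_filter_of_dominated_convergence
    (fun t => Real.exp (Real.pi * |s.im|) * ‖(t : ℂ) ^ (s - 1) • φ t‖)
    (.of_forall fun ε => ?_) ?_ (hφ.norm.const_mul _) ?_
  · refine AEStronglyMeasurable.mul (Measurable.aestronglyMeasurable ?_) hφ.aestronglyMeasurable
    unfold logRescale
    fun_prop
  · filter_upwards [self_mem_nhdsWithin] with ε hε
    refine (ae_restrict_iff' measurableSet_Ioi).2 (.of_forall fun t ht => ?_)
    rw [norm_mul]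
    gcongr
    exact norm_cpow_neg_mul_logRescale_hardyPower_le ht hs hε hσ hy
  · refine (ae_restrict_iff' measurableSet_Ioi).2 (.of_forall fun t (ht : 0 < t) => ?_)
    have ht' : (t : ℂ) ≠ 0 := Complex.ofReal_ne_zero.2 ht.ne'
    have hcancel : (t : ℂ) ^ (-s) * ((t : ℂ) ^ s * logProfile s σ r) = logProfile s σ r := by
      rw [← mul_assoc, ← Complex.cpow_add _ _ ht', neg_add_cancel, Complex.cpow_zero, one_mul]
    have h := ((tendsto_logRescale_hardyPower_comp_div (s := s) (y := y) hσ' ht hr).const_mul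
      ((t : ℂ) ^ (-s))).mul_const ((t : ℂ) ^ (s - 1) • φ t)
    rwa [hcancel] at h

lemma enorm_mellin_rpow_mul_sum_le_liminf (hp : 0 < p) (hs : 0 < s.re) (hφ : MellinConvergent φ s)
    (hy : 0 ≤ y) {S : Finset ℝ} (hS : ∀ σ ∈ S, |σ| = 1) :
    ‖mellin φ s‖ₑ ^ p * ∑ σ ∈ S, ∫⁻ r, ‖logProfile s σ r‖ₑ ^ p ≤
      liminf (fun ε : ℝ => ∑ σ ∈ S,
        ∫⁻ r, ‖logRescale s ε σ y (HphiHol φ (hardyPower (s + ε))) r‖ₑ ^ p) (𝓝[>] 0) := by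
  have hmeas (ε σ : ℝ) : AEMeasurable fun r =>
      ‖logRescale s ε σ y (HphiHol φ (hardyPower (s + ε))) r‖ₑ ^ p :=
    (aestronglyMeasurable_logRescale_HphiHol hφ measurable_hardyPower).enorm.pow_const p
  have hmeas' (σ : ℝ) : Measurable fun r => ‖logProfile s σ r‖ₑ ^ p := by
    have : Measurable (logProfile s σ) := .indicator (by fun_prop) measurableSet_Ioi
    fun_prop
  simp_rw [← lintegral_finsetSum' S fun σ _ => hmeas _ σ]
  rw [← lintegral_finsetSum S fun σ _ => hmeas' σ,
    ← lintegral_const_mul _ (Finset.measurable_fun_sum S fun σ _ => hmeas' σ)]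
  refine le_trans (lintegral_mono fun r => ?_)
    (lintegral_liminf_le' fun ε => Finset.aemeasurable_fun_sum S fun σ _ => hmeas ε σ)
  rcases le_or_gt r 0 with hr | hr
  · simp [logProfile, hr, hp]
  · have hlim := tendsto_finsetSum S fun σ hσ =>
      (tendsto_logRescale_HphiHol_hardyPower hφ hs (hS σ hσ) hy hr).enorm.ennrpow_const p
    rw [hlim.liminf_eq, Finset.mul_sum]
    simp only [enorm_mul, ENNReal.mul_rpow_of_nonneg _ _ hp.le, mul_comm, le_refl]

end Limits

section Main

variable {p a : ℝ} {s : ℂ} {φ : ℝ → ℂ}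

lemma hardyNorm_hardyPower_rpow_le (hp : 0 < p) (hs : a + 1 ≤ s.re * p) :
    hardyNorm p a (hardyPower s) ^ p ≤ hardyLineIntegral p a (hardyPower s) 0 :=
  hardyNorm_rpow_le hp fun _ hy => hardyLineIntegral_hardyPower_le hp hs hy.le

lemma sum_lintegral_logRescale_HphiHol_le {ε : ℝ} (hp : 0 < p) (hs : s.re * p = a + 1)
    (hε : 0 < ε) {C : ℝ≥0∞}
    (hbound : ∀ f : ℂ → ℂ, DifferentiableOn ℂ f upperHalf → hardyNorm p a f < ⊤ →
      hardyNorm p a (HphiHol φ f) ≤ C * hardyNorm p a f)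
    (hfin : ∑ σ ∈ {1, -1}, ∫⁻ r, ‖logRescale s ε σ 0 (hardyPower (s + ε)) r‖ₑ ^ p < ⊤) :
    ∑ σ ∈ {1, -1}, ∫⁻ r, ‖logRescale s ε σ 1 (HphiHol φ (hardyPower (s + ε))) r‖ₑ ^ p ≤
      C ^ p * ∑ σ ∈ {1, -1}, ∫⁻ r, ‖logRescale s ε σ 0 (hardyPower (s + ε)) r‖ₑ ^ p := by
  set f := hardyPower (s + ε)
  have hf_norm : hardyNorm p a f ^ p ≤ hardyLineIntegral p a f 0 :=
    hardyNorm_hardyPower_rpow_le hp (by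
      rw [Complex.add_re, Complex.ofReal_re, add_mul, hs]
      exact le_add_of_nonneg_right (by positivity))
  simp_rw [← ofReal_mul_hardyLineIntegral hp hs hε] at hfin ⊢
  have hf_fin : hardyNorm p a f < ⊤ := (ENNReal.rpow_lt_top_iff_of_pos hp).1
    (hf_norm.trans_lt (ENNReal.lt_top_of_mul_ne_top_right hfin.ne (by simpa using hε)))
  calc
    _ ≤ ENNReal.ofReal ε * hardyNorm p a (HphiHol φ f) ^ p := by
      gcongr
      exact hardyLineIntegral_le_hardyNorm_rpow hp one_pos
    _ ≤ ENNReal.ofReal ε * (C * hardyNorm p a f) ^ p := by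
      gcongr
      exact hbound f differentiableOn_hardyPower hf_fin
    _ ≤ ENNReal.ofReal ε * (C ^ p * hardyLineIntegral p a f 0) := by
      rw [ENNReal.mul_rpow_of_nonneg _ _ hp.le]
      gcongr
    _ = _ := mul_left_comm _ _ _

lemma enorm_mellin_le_of_hardyNorm_HphiHol_le (hp : 0 < p) (ha : -1 < a)
    (hs : s.re * p = a + 1) (hφ : MellinConvergent φ s) {C : ℝ≥0∞}
    (hbound : ∀ f : ℂ → ℂ, DifferentiableOn ℂ f upperHalf → hardyNorm p a f < ⊤ →
      hardyNorm p a (HphiHol φ f) ≤ C * hardyNorm p a f) :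
    ‖mellin φ s‖ₑ ≤ C := by
  have hs_pos : 0 < s.re := pos_of_mul_pos_left (hs ▸ by linarith) hp.le
  have habs : ∀ σ ∈ ({1, -1} : Finset ℝ), |σ| = 1 := by simp
  set N : ℝ≥0∞ := ∑ σ ∈ {1, -1}, ∫⁻ r, ‖logProfile s σ r‖ₑ ^ p with hN
  have hN_ne_zero : N ≠ 0 := by
    simp [hN, lintegral_enorm_logProfile_rpow hp, hp, Complex.cpow_eq_zero_iff]
  have hN_ne_top : N ≠ ⊤ := by
    simp [hN, lintegral_enorm_logProfile_rpow hp, hp, ENNReal.mul_eq_top]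
  have hlim : Tendsto (fun ε : ℝ =>
      ∑ σ ∈ {1, -1}, ∫⁻ r, ‖logRescale s ε σ 0 (hardyPower (s + ε)) r‖ₑ ^ p) (𝓝[>] 0) (𝓝 N) :=
    tendsto_finsetSum _ fun σ hσ =>
      tendsto_lintegral_enorm_logRescale_hardyPower_rpow hp hs_pos (habs σ hσ)
  have hle : ‖mellin φ s‖ₑ ^ p * N ≤ C ^ p * N := by
    refine (enorm_mellin_rpow_mul_sum_le_liminf hp hs_pos hφ zero_le_one habs).trans ?_
    rw [← (ENNReal.Tendsto.const_mul hlim (.inl hN_ne_zero)).liminf_eq]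
    refine liminf_le_liminf ?_
    filter_upwards [self_mem_nhdsWithin, hlim.eventually_lt_const hN_ne_top.lt_top] with ε hε hfin
    exact sum_lintegral_logRescale_HphiHol_le hp hs hε hbound hfin
  exact (ENNReal.rpow_le_rpow_iff hp).1 ((ENNReal.mul_le_mul_iff_left hN_ne_zero hN_ne_top).1 hle)

lemma khat_eq_mellin (c ξ : ℝ) : khat φ c ξ = mellin φ (c - Complex.I * ξ) := by
  simp only [khat, mellin, smul_eq_mul, mul_comm (φ _), sub_right_comm]

lemma mellinConvergent_of_integrableOn_norm_mul_rpow
    (hφm : AEStronglyMeasurable φ (volume.restrict (Set.Ioi 0)))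
    (hφ : IntegrableOn (fun t => ‖φ t‖ * t ^ (s.re - 1)) (Set.Ioi 0)) : MellinConvergent φ s := by
  have hpow : Measurable fun t : ℝ => (t : ℂ) ^ (s - 1) := by fun_prop
  refine Integrable.mono' hφ (hpow.aestronglyMeasurable.smul hφm) ?_
  refine (ae_restrict_iff' measurableSet_Ioi).2 (.of_forall fun t ht => ?_)
  rw [norm_smul, Complex.norm_cpow_eq_rpow_re_of_pos ht, mul_comm, Complex.sub_re, Complex.one_re]

theorem stmt11_general (p a : ℝ) (hp : 0 < p) (ha : -1 < a) (φ : ℝ → ℂ)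
    (hφm : AEStronglyMeasurable φ (volume.restrict (Set.Ioi 0)))
    (hφ : IntegrableOn (fun t => ‖φ t‖ * t ^ ((a + 1) / p - 1)) (Set.Ioi (0 : ℝ)))
    (C : ℝ) (hC : 0 ≤ C)
    (hbound : ∀ f : ℂ → ℂ, DifferentiableOn ℂ f upperHalf → hardyNorm p a f < ⊤ →
      hardyNorm p a (HphiHol φ f) ≤ ENNReal.ofReal C * hardyNorm p a f) :
    ∀ ξ : ℝ, ‖khat φ ((a + 1) / p) ξ‖ ≤ C := by
  intro ξ
  set s : ℂ := ((a + 1) / p : ℝ) - Complex.I * ξ with hs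
  have hre : s.re = (a + 1) / p := by simp [hs]
  have hmellin : MellinConvergent φ s :=
    mellinConvergent_of_integrableOn_norm_mul_rpow hφm (hre ▸ hφ)
  rw [khat_eq_mellin, ← ENNReal.ofReal_le_ofReal_iff hC, ofReal_norm]
  exact enorm_mellin_le_of_hardyNorm_HphiHol_le hp ha (hre ▸ div_mul_cancel₀ _ hp.ne') hmellin
    hbound

end Main

/-- If `C ≥ 0` satisfies `‖ℋ_φ f‖ ≤ C ‖f‖` for every holomorphic `f` on
`𝕌` of finite weighted Hardy norm, then `sup_{ξ ∈ ℝ} |k̂_{a,p}(ξ)| ≤ C`. -/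
theorem stmt11 (p a : ℝ) (hp : 1 ≤ p) (ha : -1 < a) (φ : ℝ → ℂ) (hφm : Measurable φ)
    (hφ : IntegrableOn (fun t => ‖φ t‖ * t ^ ((a + 1) / p - 1)) (Set.Ioi (0 : ℝ)))
    (C : ℝ) (hC : 0 ≤ C)
    (hbound : ∀ f : ℂ → ℂ, DifferentiableOn ℂ f upperHalf → hardyNorm p a f < ⊤ →
      hardyNorm p a (HphiHol φ f) ≤ ENNReal.ofReal C * hardyNorm p a f) :
    ∀ ξ : ℝ, ‖khat φ ((a + 1) / p) ξ‖ ≤ C :=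
  stmt11_general p a (one_pos.trans_le hp) ha φ hφm.aestronglyMeasurable hφ C hC hbound
end
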